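/- arXiv:1908.04543 — 3 statements merged into one kernel-verified Lean document; each statement's English description precedes it below -/
import Mathlib

section
/- The linear operator A₀ on L²((0,∞)) defined by (A₀φ)(t) = ∫₀^∞ φ(u)/(t+u) du is a bounded, self-adjoint, positive operator, its operator norm equals π, and its spectrum equals the interval [0, π]. -/
open MeasureTheory Real Set
open scoped RealInnerProductSpace

open Filter Function Topology
open scoped ENNReal NNReal

/-!
The weight `u ^ (-1 / 2)` is an eigenfunction of the Hilbert kernel with eigenvalue `π`, except that
it is not in `L²`; it serves as the weight of a Schur test, which gives `‖A₀‖ ≤ π`. Positivity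
follows from `1 / (t + u) = ∫₀^∞ exp (-t s) exp (-u s) ds`, which makes `⟪A₀ φ, φ⟫` the squared `L²`
norm of the Laplace transform of `φ`. Therefore the spectrum lies in `[0, π]`.

Conversely, `u ^ (-1 / 2) cos (ξ log u)` is a generalized eigenfunction whose eigenvalue, the cosine
transform at `ξ` of `1 / (2 cosh (x / 2))`, takes every value in `(0, π)` at some `ξ ≠ 0`. When it
is truncated to `(1, e^L)`, the failure of the eigenvalue equation comes only from pairs `(t, u)`
separated by an endpoint, and its `L²` norm is bounded in `L` because by homogeneity all endpoints
contribute alike. The `L²` norm of the truncation grows like `√L`, so the eigenvalue is in the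
spectrum.
-/

section SchurTest

variable {α β : Type*} [MeasurableSpace α] [MeasurableSpace β] {μ : Measure α} {ν : Measure β}

theorem sq_lintegral_le_mul_of_sq_le_mul {f g h : α → ℝ≥0∞} (hf : AEMeasurable f μ)
    (hg : AEMeasurable g μ) (hle : ∀ᵐ x ∂μ, h x ^ 2 ≤ f x * g x) :
    (∫⁻ x, h x ∂μ) ^ 2 ≤ (∫⁻ x, f x ∂μ) * ∫⁻ x, g x ∂μ := by
  have sq_rpow_half (a : ℝ≥0∞) : (a ^ 2) ^ (1 / 2 : ℝ) = a := by
    rw [← ENNReal.rpow_natCast, ← ENNReal.rpow_mul]; norm_num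
  have rpow_half_sq (a : ℝ≥0∞) : (a ^ (1 / 2 : ℝ)) ^ 2 = a := by
    rw [← ENNReal.rpow_natCast, ← ENNReal.rpow_mul]; norm_num
  have hroot : ∀ᵐ x ∂μ, h x ≤ f x ^ (1 / 2 : ℝ) * g x ^ (1 / 2 : ℝ) := by
    filter_upwards [hle] with x hx
    rw [← ENNReal.mul_rpow_of_nonneg _ _ (by norm_num), ← sq_rpow_half (h x)]
    gcongr
  calc (∫⁻ x, h x ∂μ) ^ 2
      ≤ ((∫⁻ x, f x ∂μ) ^ (1 / 2 : ℝ) * (∫⁻ x, g x ∂μ) ^ (1 / 2 : ℝ)) ^ 2 := by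
        gcongr
        exact (lintegral_mono_ae hroot).trans <| ENNReal.lintegral_mul_norm_pow_le hf hg
          (by norm_num) (by norm_num) (by norm_num)
    _ = (∫⁻ x, f x ∂μ) * ∫⁻ x, g x ∂μ := by rw [mul_pow, rpow_half_sq, rpow_half_sq]

theorem lintegral_sq_lintegral_mul_le_of_schur [SFinite μ] [SFinite ν] {K : α → β → ℝ≥0∞}
    (hK : Measurable (uncurry K)) {p : α → ℝ≥0∞} {q : β → ℝ≥0∞} (hp : AEMeasurable p μ)
    (hq : AEMeasurable q ν) (hq_zero : ∀ᵐ y ∂ν, q y ≠ 0) (hq_top : ∀ᵐ y ∂ν, q y ≠ ∞) {a b : ℝ≥0∞}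
    (hrow : ∀ᵐ x ∂μ, ∫⁻ y, K x y * q y ∂ν ≤ a * p x)
    (hcol : ∀ᵐ y ∂ν, ∫⁻ x, K x y * p x ∂μ ≤ b * q y) {f : β → ℝ≥0∞} (hf : AEMeasurable f ν) :
    ∫⁻ x, (∫⁻ y, K x y * f y ∂ν) ^ 2 ∂μ ≤ a * b * ∫⁻ y, f y ^ 2 ∂ν := by
  -- Cauchy-Schwarz is applied to the splitting `K f = √(K q) * √(K q⁻¹ f ^ 2)`.
  set g : β → ℝ≥0∞ := fun y ↦ (q y)⁻¹ * f y ^ 2 with hg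
  have hg_meas : AEMeasurable g ν := by fun_prop
  have hKg : AEMeasurable (uncurry fun x y ↦ p x * (K x y * g y)) (μ.prod ν) :=
    hp.comp_fst.mul (hK.aemeasurable.mul hg_meas.comp_snd)
  have hKx (x : α) : Measurable (K x) := hK.of_uncurry_left
  have hKy (y : β) : Measurable (K · y) := hK.of_uncurry_right
  have hqg : ∀ᵐ y ∂ν, q y * g y = f y ^ 2 := by
    filter_upwards [hq_zero, hq_top] with y h0 htop
    rw [hg, ← mul_assoc, ENNReal.mul_inv_cancel h0 htop, one_mul]
  have hcs (x : α) :
      (∫⁻ y, K x y * f y ∂ν) ^ 2 ≤ (∫⁻ y, K x y * q y ∂ν) * ∫⁻ y, K x y * g y ∂ν := by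
    refine sq_lintegral_le_mul_of_sq_le_mul (by fun_prop) (by fun_prop) ?_
    filter_upwards [hqg] with y hy
    rw [mul_mul_mul_comm, hy, mul_pow, sq (K x y)]
  calc ∫⁻ x, (∫⁻ y, K x y * f y ∂ν) ^ 2 ∂μ
      ≤ ∫⁻ x, a * ∫⁻ y, p x * (K x y * g y) ∂ν ∂μ := by
        refine lintegral_mono_ae ?_
        filter_upwards [hrow] with x hx
        rw [lintegral_const_mul'' _ (by fun_prop), ← mul_assoc]
        exact (hcs x).trans (by gcongr)
    _ = a * ∫⁻ y, ∫⁻ x, p x * (K x y * g y) ∂μ ∂ν := by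
        have hinner : AEMeasurable (fun x ↦ ∫⁻ y, p x * (K x y * g y) ∂ν) μ :=
          hKg.lintegral_prod_right'
        rw [lintegral_const_mul'' _ hinner, lintegral_lintegral_swap hKg]
    _ = a * ∫⁻ y, (∫⁻ x, K x y * p x ∂μ) * g y ∂ν := by
        congr with y
        rw [← lintegral_mul_const'' _ (by fun_prop)]
        congr with x
        ring
    _ ≤ a * ∫⁻ y, b * f y ^ 2 ∂ν := by
        gcongr a * ?_
        refine lintegral_mono_ae ?_
        filter_upwards [hcol, hqg] with y hy hqgy
        calc (∫⁻ x, K x y * p x ∂μ) * g y ≤ b * q y * g y := mul_le_mul' hy le_rfl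
          _ = b * f y ^ 2 := by rw [mul_assoc, hqgy]
    _ = a * b * ∫⁻ y, f y ^ 2 ∂ν := by
        rw [lintegral_const_mul'' _ (by fun_prop), mul_assoc]

end SchurTest

theorem eLpNorm_two_sq {α E : Type*} [MeasurableSpace α] [ENorm E] (f : α → E) (μ : Measure α) :
    eLpNorm f 2 μ ^ 2 = ∫⁻ x, ‖f x‖ₑ ^ 2 ∂μ := by
  simpa using eLpNorm_nnreal_pow_eq_lintegral (f := f) (μ := μ) (two_ne_zero' ℝ≥0)

/-- Kernels `k` for which `f ↦ ∫ |k x y| f y ∂ν` is bounded by `C` from `L²(ν)` to `L²(μ)`, so that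
the integral operator with kernel `k` is defined by absolutely convergent integrals. The bound is
imposed on nonnegative `f` only, which makes sense before any integrability is known. -/
structure IsL2BoundedKernel {α β : Type*} [MeasurableSpace α] [MeasurableSpace β] (k : α → β → ℝ)
    (μ : Measure α) (ν : Measure β) (C : ℝ≥0) : Prop where
  measurable : Measurable (uncurry k)
  lintegral_sq_le : ∀ f : β → ℝ≥0∞, AEMeasurable f ν →
    ∫⁻ x, (∫⁻ y, ‖k x y‖ₑ * f y ∂ν) ^ 2 ∂μ ≤ C ^ 2 * ∫⁻ y, f y ^ 2 ∂ν

namespace IsL2BoundedKernel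

variable {α β : Type*} [MeasurableSpace α] [MeasurableSpace β] {μ : Measure α} {ν : Measure β}
  {k : α → β → ℝ} {C : ℝ≥0} {f : β → ℝ}

theorem abs (h : IsL2BoundedKernel k μ ν C) : IsL2BoundedKernel (fun x y ↦ |k x y|) μ ν C where
  measurable := h.measurable.abs
  lintegral_sq_le := by simpa only [enorm_abs] using h.lintegral_sq_le

theorem eLpNorm_integral_le (h : IsL2BoundedKernel k μ ν C) (hf : AEStronglyMeasurable f ν) :
    eLpNorm (fun x ↦ ∫ y, k x y * f y ∂ν) 2 μ ≤ C * eLpNorm f 2 ν := by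
  rw [← ENNReal.pow_le_pow_left_iff two_ne_zero, mul_pow, eLpNorm_two_sq, eLpNorm_two_sq]
  refine le_trans ?_ (h.lintegral_sq_le _ hf.enorm)
  gcongr with x
  simpa only [enorm_mul] using enorm_integral_le_lintegral_enorm (μ := ν) fun y ↦ k x y * f y

variable [SFinite ν]

theorem ae_integrable (h : IsL2BoundedKernel k μ ν C) (hf : MemLp f 2 ν) :
    ∀ᵐ x ∂μ, Integrable (fun y ↦ k x y * f y) ν := by
  have hfin : ∫⁻ x, (∫⁻ y, ‖k x y‖ₑ * ‖f y‖ₑ ∂ν) ^ 2 ∂μ ≠ ∞ := by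
    refine ((h.lintegral_sq_le _ hf.aestronglyMeasurable.enorm).trans_lt ?_).ne
    rw [← eLpNorm_two_sq]
    exact ENNReal.mul_lt_top (by finiteness) (ENNReal.pow_lt_top hf.eLpNorm_lt_top)
  have hmeas : AEMeasurable (fun x ↦ (∫⁻ y, ‖k x y‖ₑ * ‖f y‖ₑ ∂ν) ^ 2) μ := by
    have : AEMeasurable (fun z : α × β ↦ ‖k z.1 z.2‖ₑ * ‖f z.2‖ₑ) (μ.prod ν) :=
      h.measurable.enorm.aemeasurable.mul hf.aestronglyMeasurable.enorm.comp_snd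
    exact this.lintegral_prod_right'.pow_const 2
  filter_upwards [ae_lt_top' hmeas hfin] with x hx
  refine ⟨h.measurable.of_uncurry_left.aestronglyMeasurable.mul hf.aestronglyMeasurable, ?_⟩
  simpa [hasFiniteIntegral_iff_enorm, enorm_mul, lt_top_iff_ne_top] using hx

theorem aestronglyMeasurable (h : IsL2BoundedKernel k μ ν C) (hf : AEStronglyMeasurable f ν) :
    AEStronglyMeasurable (fun x ↦ ∫ y, k x y * f y ∂ν) μ := by
  have : AEStronglyMeasurable (fun z : α × β ↦ k z.1 z.2 * f z.2) (μ.prod ν) :=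
    h.measurable.aestronglyMeasurable.mul hf.comp_snd
  exact this.integral_prod_right'

theorem memLp_integral (h : IsL2BoundedKernel k μ ν C) (hf : MemLp f 2 ν) :
    MemLp (fun x ↦ ∫ y, k x y * f y ∂ν) 2 μ :=
  ⟨h.aestronglyMeasurable hf.1, (h.eLpNorm_integral_le hf.1).trans_lt <|
    ENNReal.mul_lt_top ENNReal.coe_lt_top hf.eLpNorm_lt_top⟩

/-- The bounded operator `L²(ν) → L²(μ)` with kernel `k`. -/
noncomputable def integralOperator (h : IsL2BoundedKernel k μ ν C) : Lp ℝ 2 ν →L[ℝ] Lp ℝ 2 μ :=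
  LinearMap.mkContinuous
    { toFun φ := (h.memLp_integral (Lp.memLp φ)).toLp
      map_add' φ ψ := by
        rw [← MemLp.toLp_add, MemLp.toLp_eq_toLp_iff]
        filter_upwards [h.ae_integrable (Lp.memLp φ), h.ae_integrable (Lp.memLp ψ)] with x hφ hψ
        rw [Pi.add_apply, ← integral_add hφ hψ]
        refine integral_congr_ae ?_
        filter_upwards [Lp.coeFn_add φ ψ] with y hy
        rw [hy, Pi.add_apply, mul_add]
      map_smul' c φ := by
        rw [RingHom.id_apply, ← MemLp.toLp_const_smul, MemLp.toLp_eq_toLp_iff]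
        refine Eventually.of_forall fun x ↦ ?_
        rw [Pi.smul_apply, ← integral_smul]
        refine integral_congr_ae ?_
        filter_upwards [Lp.coeFn_smul c φ] with y hy
        rw [hy, Pi.smul_apply, mul_smul_comm] }
    C fun φ ↦ by
      rw [LinearMap.coe_mk, AddHom.coe_mk, Lp.norm_toLp, Lp.norm_def, ← ENNReal.coe_toReal C,
        ← ENNReal.toReal_mul]
      exact ENNReal.toReal_mono (ENNReal.mul_ne_top ENNReal.coe_ne_top (Lp.eLpNorm_ne_top φ))
        (h.eLpNorm_integral_le (Lp.aestronglyMeasurable φ))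

theorem norm_integralOperator_le (h : IsL2BoundedKernel k μ ν C) : ‖h.integralOperator‖ ≤ C :=
  LinearMap.mkContinuous_norm_le _ C.coe_nonneg _

theorem coeFn_integralOperator (h : IsL2BoundedKernel k μ ν C) (φ : Lp ℝ 2 ν) :
    h.integralOperator φ =ᵐ[μ] fun x ↦ ∫ y, k x y * φ y ∂ν :=
  (h.memLp_integral (Lp.memLp φ)).coeFn_toLp

theorem coeFn_integralOperator_toLp (h : IsL2BoundedKernel k μ ν C) (hf : MemLp f 2 ν) :
    h.integralOperator hf.toLp =ᵐ[μ] fun x ↦ ∫ y, k x y * f y ∂ν := by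
  filter_upwards [h.coeFn_integralOperator hf.toLp] with x hx
  rw [hx]
  refine integral_congr_ae ?_
  filter_upwards [hf.coeFn_toLp] with y hy
  rw [hy]

theorem integrable_mul_kernel_mul [SFinite μ] (h : IsL2BoundedKernel k μ ν C) {g : α → ℝ}
    (hg : MemLp g 2 μ) (hf : MemLp f 2 ν) :
    Integrable (fun z : α × β ↦ g z.1 * (k z.1 z.2 * f z.2)) (μ.prod ν) := by
  refine (integrable_prod_iff ?_).2 ⟨?_, ?_⟩
  · exact hg.aestronglyMeasurable.comp_fst.mul
      (h.measurable.aestronglyMeasurable.mul hf.aestronglyMeasurable.comp_snd)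
  · filter_upwards [h.ae_integrable hf] with x hx using hx.const_mul _
  · simp only [norm_mul, integral_const_mul]
    exact hg.norm.integrable_mul (h.abs.memLp_integral hf.norm)

theorem inner_integralOperator (h : IsL2BoundedKernel k μ ν C) (φ : Lp ℝ 2 ν) (ψ : Lp ℝ 2 μ) :
    ⟪h.integralOperator φ, ψ⟫ = ∫ x, ∫ y, ψ x * (k x y * φ y) ∂ν ∂μ := by
  rw [L2.inner_def]
  refine integral_congr_ae ?_
  filter_upwards [h.coeFn_integralOperator φ] with x hx
  rw [hx, integral_const_mul]
  rfl

theorem inner_integralOperator_eq_of_swap [SFinite μ] {k' : β → α → ℝ} {C' : ℝ≥0}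
    (h : IsL2BoundedKernel k μ ν C) (h' : IsL2BoundedKernel k' ν μ C') (hk : ∀ x y, k x y = k' y x)
    (φ : Lp ℝ 2 ν) (ψ : Lp ℝ 2 μ) :
    ⟪h.integralOperator φ, ψ⟫ = ⟪φ, h'.integralOperator ψ⟫ := by
  rw [real_inner_comm _ φ, h.inner_integralOperator, h'.inner_integralOperator,
    integral_integral_swap (h.integrable_mul_kernel_mul (Lp.memLp ψ) (Lp.memLp φ))]
  congr with y
  congr with x
  rw [hk]
  ring

end IsL2BoundedKernel

theorem IsL2BoundedKernel.inner_integralOperator_self_nonneg_of_factorization {α σ : Type*}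
    [MeasurableSpace α] [MeasurableSpace σ] {μ : Measure α} [SFinite μ] {ρ : Measure σ} [SFinite ρ]
    {k : α → α → ℝ} {C : ℝ≥0} (h : IsL2BoundedKernel k μ μ C) {g : α → σ → ℝ}
    (hg : Measurable (uncurry g)) (hg_nonneg : ∀ x s, 0 ≤ g x s)
    (hg_int : ∀ᵐ z ∂μ.prod μ, Integrable (fun s ↦ g z.1 s * g z.2 s) ρ)
    (hg_eq : ∀ᵐ z ∂μ.prod μ, ∫ s, g z.1 s * g z.2 s ∂ρ = k z.1 z.2) (φ : Lp ℝ 2 μ) :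
    0 ≤ ⟪h.integralOperator φ, φ⟫ := by
  have hφ : MemLp φ 2 μ := Lp.memLp φ
  have hkφ := h.integrable_mul_kernel_mul hφ hφ
  let F (z : α × α) (s : σ) : ℝ := φ z.1 * φ z.2 * (g z.1 s * g z.2 s)
  have hF_meas : AEStronglyMeasurable (uncurry F) ((μ.prod μ).prod ρ) := by
    refine (hφ.1.comp_fst.mul hφ.1.comp_snd).comp_fst.mul (Measurable.aestronglyMeasurable ?_)
    exact (hg.comp (by fun_prop : Measurable fun w : (α × α) × σ ↦ (w.1.1, w.2))).mul
      (hg.comp (by fun_prop : Measurable fun w : (α × α) × σ ↦ (w.1.2, w.2)))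
  have hF : Integrable (uncurry F) ((μ.prod μ).prod ρ) := by
    refine (integrable_prod_iff hF_meas).2 ⟨?_, hkφ.norm.congr ?_⟩
    · filter_upwards [hg_int] with z hz using hz.const_mul (φ z.1 * φ z.2)
    · filter_upwards [hg_eq] with z hz
      have hg_norm (s : σ) : ‖g z.1 s * g z.2 s‖ = g z.1 s * g z.2 s :=
        norm_of_nonneg (mul_nonneg (hg_nonneg _ _) (hg_nonneg _ _))
      have hk_nonneg : 0 ≤ k z.1 z.2 := by
        rw [← hz]; exact integral_nonneg fun s ↦ mul_nonneg (hg_nonneg _ _) (hg_nonneg _ _)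
      simp only [F, uncurry, norm_mul (φ z.1 * φ z.2), hg_norm, integral_const_mul, hz]
      rw [norm_mul, norm_mul, norm_mul, norm_of_nonneg hk_nonneg]
      ring
  calc 0 ≤ ∫ s, (∫ x, φ x * g x s ∂μ) * ∫ y, φ y * g y s ∂μ ∂ρ :=
        integral_nonneg fun s ↦ mul_self_nonneg _
    _ = ∫ s, ∫ z, F z s ∂μ.prod μ ∂ρ := by
        congr with s
        rw [← integral_prod_mul]
        congr with z
        exact mul_mul_mul_comm _ _ _ _
    _ = ∫ z, ∫ s, F z s ∂ρ ∂μ.prod μ := (integral_integral_swap hF).symm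
    _ = ∫ z, φ z.1 * (k z.1 z.2 * φ z.2) ∂μ.prod μ := by
        refine integral_congr_ae ?_
        filter_upwards [hg_eq] with z hz
        simp only [F, integral_const_mul, hz]
        ring
    _ = ⟪h.integralOperator φ, φ⟫ := by
        rw [h.inner_integralOperator, integral_prod _ hkφ]

section Spectrum

theorem spectrum_subset_Icc_of_isPositive {E : Type*} [NormedAddCommGroup E]
    [InnerProductSpace ℝ E] [CompleteSpace E] {T : E →L[ℝ] E} (hT : T.IsPositive) :
    spectrum ℝ T ⊆ Icc 0 ‖T‖ := by
  intro l hl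
  refine ⟨SpectrumRestricts.nnreal_iff.1 hT.spectrumRestricts l hl, (le_abs_self l).trans ?_⟩
  refine (spectrum.norm_le_norm_mul_of_mem hl).trans ?_
  exact mul_le_of_le_one_right (norm_nonneg T) ContinuousLinearMap.norm_id_le

theorem mem_spectrum_of_norm_smul_sub_le {𝕜 E ι : Type*} [NontriviallyNormedField 𝕜]
    [NormedAddCommGroup E] [NormedSpace 𝕜 E] {T : E →L[𝕜] E} {c : 𝕜} {l : Filter ι} [l.NeBot]
    {x : ι → E} {R : ℝ} (hx : Tendsto (‖x ·‖) l atTop) (hR : ∀ᶠ i in l, ‖c • x i - T (x i)‖ ≤ R) :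
    c ∈ spectrum 𝕜 T := by
  rintro ⟨u, hu⟩
  have hinv (y : E) : y = (↑u⁻¹ : E →L[𝕜] E) (c • y - T y) := by
    have := DFunLike.congr_fun u.inv_mul y
    rw [hu] at this
    exact this.symm
  have hle : ∀ᶠ i in l, ‖x i‖ ≤ ‖(↑u⁻¹ : E →L[𝕜] E)‖ * R := by
    filter_upwards [hR] with i hi
    calc ‖x i‖ = ‖(↑u⁻¹ : E →L[𝕜] E) (c • x i - T (x i))‖ := by rw [← hinv]
      _ ≤ ‖(↑u⁻¹ : E →L[𝕜] E)‖ * ‖c • x i - T (x i)‖ := ContinuousLinearMap.le_opNorm _ _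
      _ ≤ ‖(↑u⁻¹ : E →L[𝕜] E)‖ * R := by gcongr
  obtain ⟨i, hi, hi'⟩ := (hle.and (hx.eventually_gt_atTop _)).exists
  exact hi.not_gt hi'

end Spectrum

theorem IsL2BoundedKernel.of_schur {α β : Type*} [MeasurableSpace α] [MeasurableSpace β]
    {μ : Measure α} {ν : Measure β} [SFinite μ] [SFinite ν] {k : α → β → ℝ}
    (hk : Measurable (uncurry k)) {p : α → ℝ} {q : β → ℝ} (hp : AEMeasurable p μ)
    (hq : AEMeasurable q ν) (hq_ne : ∀ᵐ y ∂ν, q y ≠ 0) {C : ℝ≥0}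
    (hrow : ∀ᵐ x ∂μ, ∫⁻ y, ‖k x y * q y‖ₑ ∂ν ≤ C * ‖p x‖ₑ)
    (hcol : ∀ᵐ y ∂ν, ∫⁻ x, ‖k x y * p x‖ₑ ∂μ ≤ C * ‖q y‖ₑ) : IsL2BoundedKernel k μ ν C where
  measurable := hk
  lintegral_sq_le f hf := by
    simp only [enorm_mul] at hrow hcol
    rw [sq (C : ℝ≥0∞)]
    refine lintegral_sq_lintegral_mul_le_of_schur hk.enorm hp.enorm hq.enorm ?_ ?_ hrow hcol hf
    · simpa using hq_ne
    · simp

section Truncation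

variable {α : Type*} [MeasurableSpace α] {μ : Measure α} {k : α → α → ℝ} {w e : α → ℝ} {C : ℝ≥0}
  {c : ℝ} {S T : Set α}

/-- The total mass of `|w x| |k x y| |w y|` on `S × T`. For `T = Sᶜ` it measures how strongly the
kernel `k` couples `S` to its complement, and so the error made by cutting off at the boundary of
`S` a function dominated by `w`. -/
noncomputable def kernelFlux (k : α → α → ℝ) (w : α → ℝ) (μ : Measure α) (S T : Set α) : ℝ≥0∞ :=
  ∫⁻ x in S, ∫⁻ y in T, ‖w x * (k x y * w y)‖ₑ ∂μ ∂μ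

theorem kernelFlux_comm [SFinite μ] (hk : Measurable (uncurry k)) (hk_symm : ∀ x y, k x y = k y x)
    (hw : Measurable w) (S T : Set α) : kernelFlux k w μ S T = kernelFlux k w μ T S := by
  rw [kernelFlux, lintegral_lintegral_swap]
  · simp only [kernelFlux, hk_symm, mul_left_comm, mul_comm]
  · exact ((hw.comp measurable_fst).mul (hk.mul (hw.comp measurable_snd))).enorm.aemeasurable

theorem kernelFlux_mono {S' T' : Set α} (hS : S ⊆ S') (hT : T ⊆ T') :
    kernelFlux k w μ S T ≤ kernelFlux k w μ S' T' :=
  (lintegral_mono fun _ ↦ lintegral_mono_set hT).trans (lintegral_mono_set hS)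

theorem kernelFlux_union_right_le [SFinite μ] (hk : Measurable (uncurry k)) (hw : Measurable w)
    (S T T' : Set α) :
    kernelFlux k w μ S (T ∪ T') ≤ kernelFlux k w μ S T + kernelFlux k w μ S T' := by
  have hmeas : Measurable fun x ↦ ∫⁻ y in T, ‖w x * (k x y * w y)‖ₑ ∂μ :=
    ((hw.comp measurable_fst).mul (hk.mul (hw.comp measurable_snd))).enorm.lintegral_prod_right'
  rw [kernelFlux, kernelFlux, kernelFlux, ← lintegral_add_left hmeas]
  exact lintegral_mono fun x ↦ lintegral_union_le _ _ _

theorem setLIntegral_sq_setLIntegral_le_kernelFlux (hk : Measurable (uncurry k))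
    (hw : Measurable w) (hrow : ∀ᵐ x ∂μ, ∫⁻ y, ‖k x y * w y‖ₑ ∂μ ≤ C * ‖w x‖ₑ) (S T : Set α) :
    ∫⁻ x in S, (∫⁻ y in T, ‖k x y * w y‖ₑ ∂μ) ^ 2 ∂μ ≤ C * kernelFlux k w μ S T := by
  rw [kernelFlux, ← lintegral_const_mul' _ _ ENNReal.coe_ne_top]
  refine lintegral_mono_ae (ae_restrict_of_ae ?_)
  filter_upwards [hrow] with x hx
  have hkw : Measurable fun y ↦ ‖k x y * w y‖ₑ := (hk.of_uncurry_left.mul hw).enorm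
  calc (∫⁻ y in T, ‖k x y * w y‖ₑ ∂μ) ^ 2
      ≤ C * ‖w x‖ₑ * ∫⁻ y in T, ‖k x y * w y‖ₑ ∂μ := by
        rw [sq]; gcongr; exact (setLIntegral_le_lintegral _ _).trans hx
    _ = C * ∫⁻ y in T, ‖w x * (k x y * w y)‖ₑ ∂μ := by
        simp only [enorm_mul (w x), lintegral_const_mul _ hkw, mul_assoc]

theorem lintegral_enorm_sq_truncation_residual_le (hk : Measurable (uncurry k)) (hw : Measurable w)
    (hrow : ∀ᵐ x ∂μ, ∫⁻ y, ‖k x y * w y‖ₑ ∂μ ≤ C * ‖w x‖ₑ) (he : Measurable e)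
    (he_le : ∀ x, |e x| ≤ |w x|) (he_eigen : ∀ᵐ x ∂μ, ∫ y, k x y * e y ∂μ = c * e x)
    (hS : MeasurableSet S) :
    ∫⁻ x, ‖c * S.indicator e x - ∫ y, k x y * S.indicator e y ∂μ‖ₑ ^ 2 ∂μ
      ≤ C * (kernelFlux k w μ S Sᶜ + kernelFlux k w μ Sᶜ S) := by
  have hke_le (x y : α) : ‖k x y * e y‖ₑ ≤ ‖k x y * w y‖ₑ := by
    rw [enorm_mul, enorm_mul]
    gcongr
    exact enorm_le_iff_norm_le.2 (he_le y)
  have hcut (x : α) : ∫ y, k x y * S.indicator e y ∂μ = ∫ y in S, k x y * e y ∂μ := by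
    rw [← integral_indicator hS]
    congr with y
    exact (indicator_mul_right S (k x) e).symm
  have hinside : ∀ᵐ x ∂μ, x ∈ S → ‖c * S.indicator e x - ∫ y, k x y * S.indicator e y ∂μ‖ₑ ≤
      ∫⁻ y in Sᶜ, ‖k x y * w y‖ₑ ∂μ := by
    filter_upwards [hrow, he_eigen] with x hx hex hxS
    have hint : Integrable (fun y ↦ k x y * e y) μ := by
      refine ⟨(hk.of_uncurry_left.mul he).aestronglyMeasurable, ?_⟩
      exact ((lintegral_mono (hke_le x)).trans hx).trans_lt (by finiteness)
    rw [indicator_of_mem hxS, hcut, ← hex, ← integral_add_compl hS hint, add_sub_cancel_left]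
    exact (enorm_integral_le_lintegral_enorm _).trans (lintegral_mono (hke_le x))
  have houtside (x : α) (hxS : x ∈ Sᶜ) :
      ‖c * S.indicator e x - ∫ y, k x y * S.indicator e y ∂μ‖ₑ ≤ ∫⁻ y in S, ‖k x y * w y‖ₑ ∂μ := by
    rw [indicator_of_notMem hxS, mul_zero, zero_sub, enorm_neg, hcut]
    exact (enorm_integral_le_lintegral_enorm _).trans (lintegral_mono (hke_le x))
  rw [← lintegral_add_compl _ hS, mul_add]
  refine add_le_add ?_ ?_
  · refine le_trans ?_ (setLIntegral_sq_setLIntegral_le_kernelFlux hk hw hrow S Sᶜ)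
    refine lintegral_mono_ae ((ae_restrict_iff' hS).2 ?_)
    filter_upwards [hinside] with x hx hxS using by gcongr; exact hx hxS
  · refine le_trans ?_ (setLIntegral_sq_setLIntegral_le_kernelFlux hk hw hrow Sᶜ S)
    exact setLIntegral_mono' hS.compl fun x hxS ↦ by gcongr; exact houtside x hxS

theorem IsL2BoundedKernel.enorm_smul_sub_integralOperator_sq_le [SFinite μ]
    (h : IsL2BoundedKernel k μ μ C) (hw : Measurable w)
    (hrow : ∀ᵐ x ∂μ, ∫⁻ y, ‖k x y * w y‖ₑ ∂μ ≤ C * ‖w x‖ₑ) (he : Measurable e)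
    (he_le : ∀ x, |e x| ≤ |w x|) (he_eigen : ∀ᵐ x ∂μ, ∫ y, k x y * e y ∂μ = c * e x)
    (hS : MeasurableSet S) (hSe : MemLp (S.indicator e) 2 μ) :
    ‖c • hSe.toLp - h.integralOperator hSe.toLp‖ₑ ^ 2
      ≤ C * (kernelFlux k w μ S Sᶜ + kernelFlux k w μ Sᶜ S) := by
  rw [Lp.enorm_def, eLpNorm_two_sq]
  refine le_of_eq_of_le (lintegral_congr_ae ?_) <|
    lintegral_enorm_sq_truncation_residual_le h.measurable hw hrow he he_le he_eigen hS
  filter_upwards [Lp.coeFn_sub (c • hSe.toLp) (h.integralOperator hSe.toLp),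
    Lp.coeFn_smul c hSe.toLp, hSe.coeFn_toLp, h.coeFn_integralOperator_toLp hSe]
    with x hsub hsmul hcoe hint
  rw [hsub, Pi.sub_apply, hsmul, Pi.smul_apply, hcoe, hint, smul_eq_mul]

end Truncation

section CosineTransform

variable {f : ℝ → ℝ}

/-- The cosine transform, normalized without prefactors. -/
noncomputable def cosTransform (f : ℝ → ℝ) (ξ : ℝ) : ℝ := ∫ x, f x * cos (ξ * x)

theorem integrable_mul_cos (hf : Integrable f) (ξ a : ℝ) :
    Integrable fun x ↦ f x * cos (ξ * x + a) :=
  hf.mul_bdd (c := 1) (by fun_prop) (ae_of_all _ fun _ ↦ abs_cos_le_one _)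

theorem continuous_cosTransform (hf : Integrable f) : Continuous (cosTransform f) := by
  refine continuous_of_dominated (bound := (‖f ·‖)) (fun ξ ↦ hf.1.mul (by fun_prop))
    (fun ξ ↦ ae_of_all _ fun x ↦ ?_) hf.norm (ae_of_all _ fun x ↦ by fun_prop)
  rw [norm_mul]
  exact mul_le_of_le_one_right (norm_nonneg _) (abs_cos_le_one _)

theorem tendsto_cosTransform_atTop (hf : Integrable f) :
    Tendsto (cosTransform f) atTop (𝓝 0) := by
  have hscale : Tendsto (fun ξ : ℝ ↦ ξ / (2 * π)) atTop (cocompact ℝ) :=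
    (tendsto_id.atTop_div_const two_pi_pos).mono_right atTop_le_cocompact
  have hlim := (Complex.continuous_re.tendsto 0).comp <|
    (Real.tendsto_integral_exp_smul_cocompact fun x ↦ (f x : ℂ)).comp hscale
  refine hlim.congr fun ξ ↦ ?_
  have hint : Integrable fun x ↦ fourierChar (-(x * (ξ / (2 * π)))) • (f x : ℂ) := by
    have := (fourierIntegral_convergent_iff (ξ / (2 * π))).2 (hf.ofReal (𝕜 := ℂ))
    simpa [mul_comm] using this
  rw [comp_apply, comp_apply, ← RCLike.re_eq_complex_re, ← integral_re hint, cosTransform]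
  congr with x
  rw [Circle.smul_def, fourierChar_apply, smul_eq_mul, RCLike.re_eq_complex_re,
    Complex.re_mul_ofReal, Complex.exp_ofReal_mul_I_re, mul_comm, ← cos_neg]
  congr 2
  field_simp

theorem exists_ne_zero_cosTransform_eq (hf : Integrable f) {l : ℝ}
    (hl : l ∈ Ioo 0 (cosTransform f 0)) : ∃ ξ, ξ ≠ 0 ∧ cosTransform f ξ = l := by
  obtain ⟨η, hη⟩ := ((tendsto_cosTransform_atTop hf).eventually_lt_const hl.1).exists
  obtain ⟨ξ, hξ⟩ := mem_range_of_exists_le_of_exists_ge (continuous_cosTransform hf)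
    ⟨η, hη.le⟩ ⟨0, hl.2.le⟩
  exact ⟨ξ, fun h ↦ hl.2.ne (by rw [← hξ, h]), hξ⟩

theorem integral_mul_cos_add_of_even (hf : Integrable f) (hf_even : ∀ x, f (-x) = f x) (ξ a : ℝ) :
    ∫ x, f x * cos (ξ * x + a) = cosTransform f ξ * cos a := by
  have hreflect : ∫ x, f x * cos (ξ * x + a) = ∫ x, f x * cos (ξ * x - a) := by
    rw [← integral_neg_eq_self]
    congr with x
    rw [hf_even, ← cos_neg]
    ring_nf
  have hsum : ∫ x, f x * cos (ξ * x + a) + f x * cos (ξ * x - a) =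
      2 * (cosTransform f ξ * cos a) := by
    rw [cosTransform, ← integral_mul_const, ← integral_const_mul]
    congr with x
    rw [cos_add, cos_sub]
    ring
  rw [integral_add (integrable_mul_cos hf ξ a)
    (by simpa only [sub_eq_add_neg] using integrable_mul_cos hf ξ (-a)), ← hreflect] at hsum
  linarith

end CosineTransform

theorem setIntegral_Ioi_zero_eq_integral_mul_exp {E : Type*} [NormedAddCommGroup E]
    [NormedSpace ℝ E] (f : ℝ → E) {t : ℝ} (ht : 0 < t) :
    ∫ u in Ioi 0, f u = ∫ x, (t * exp x) • f (t * exp x) := by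
  have himage : (fun x ↦ t * exp x) '' univ = Ioi 0 := by
    rw [← image_image (t * ·), image_univ, range_exp, image_const_mul_Ioi_zero ht]
  rw [← himage, integral_image_eq_integral_abs_deriv_smul MeasurableSet.univ
    (fun x _ ↦ ((hasDerivAt_exp x).const_mul t).hasDerivWithinAt)
    ((mul_right_injective₀ ht.ne').comp exp_injective).injOn, setIntegral_univ]
  simp only [abs_of_pos (mul_pos ht (exp_pos _))]

/-- The even function `1 / (2 cosh (x / 2))`. Substituting `u = t * exp x` turns the Hilbert kernel
into convolution with this function. -/
noncomputable def logHilbertKernel (x : ℝ) : ℝ := (2 * cosh (x / 2))⁻¹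

namespace logHilbertKernel

theorem neg_eq (x : ℝ) : logHilbertKernel (-x) = logHilbertKernel x := by
  rw [logHilbertKernel, logHilbertKernel, neg_div, cosh_neg]

theorem integral_eq_pi : ∫ x, logHilbertKernel x = π := by
  have hsinh (x : ℝ) : HasDerivAt (fun x ↦ sinh (x / 2)) (cosh (x / 2) * (1 / 2)) x :=
    ((hasDerivAt_id x).div_const 2).sinh
  have hbij : Bijective fun x ↦ sinh (x / 2) :=
    sinh_bijective.comp (Equiv.divRight₀ (2 : ℝ) two_ne_zero).bijective
  have himage : (fun x ↦ sinh (x / 2)) '' univ = univ := image_univ_of_surjective hbij.surjective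
  rw [← integral_univ_inv_one_add_sq, ← setIntegral_univ (f := fun x : ℝ ↦ (1 + x ^ 2)⁻¹),
    ← himage, integral_image_eq_integral_abs_deriv_smul MeasurableSet.univ
    (fun x _ ↦ (hsinh x).hasDerivWithinAt) hbij.injective.injOn, setIntegral_univ]
  congr with x
  rw [logHilbertKernel, abs_of_pos (by positivity), add_comm, ← cosh_sq, smul_eq_mul]
  field_simp

theorem integrable : Integrable logHilbertKernel :=
  .of_integral_ne_zero (integral_eq_pi ▸ pi_ne_zero)

theorem cosTransform_zero : cosTransform logHilbertKernel 0 = π := by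
  simpa [cosTransform] using integral_eq_pi

end logHilbertKernel

theorem lintegral_enorm_eq_ofReal_integral {α : Type*} [MeasurableSpace α] {μ : Measure α}
    {f : α → ℝ} (hf : Integrable f μ) (hf_nonneg : 0 ≤ᵐ[μ] f) :
    ∫⁻ x, ‖f x‖ₑ ∂μ = ENNReal.ofReal (∫ x, f x ∂μ) := by
  rw [ofReal_integral_eq_lintegral_ofReal hf hf_nonneg]
  refine lintegral_congr_ae ?_
  filter_upwards [hf_nonneg] with x hx using enorm_of_nonneg hx

theorem setLIntegral_Ioc_rpow_mul_setLIntegral_Ioi_rpow {a : ℝ} (ha : 0 < a) :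
    (∫⁻ t in Ioc 0 a, ‖t ^ (-1 / 2 : ℝ)‖ₑ) * ∫⁻ u in Ioi a, ‖u ^ (-3 / 2 : ℝ)‖ₑ = 4 := by
  have hnear : ∫ t in Ioc 0 a, t ^ (-1 / 2 : ℝ) = 2 * a ^ (1 / 2 : ℝ) := by
    rw [← intervalIntegral.integral_of_le ha.le, integral_rpow (by norm_num),
      show (-1 / 2 + 1 : ℝ) = 1 / 2 by norm_num, zero_rpow (by norm_num)]
    ring
  have hfar : ∫ u in Ioi a, u ^ (-3 / 2 : ℝ) = 2 * a ^ (-(1 / 2) : ℝ) := by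
    rw [integral_Ioi_rpow_of_lt (by norm_num) ha, show (-3 / 2 + 1 : ℝ) = -(1 / 2) by norm_num]
    ring
  have hnear_int : IntegrableOn (fun t ↦ t ^ (-1 / 2 : ℝ)) (Ioc 0 a) :=
    (intervalIntegral.intervalIntegrable_rpow' (by norm_num)).1
  have hfar_int : IntegrableOn (fun u ↦ u ^ (-3 / 2 : ℝ)) (Ioi a) :=
    integrableOn_Ioi_rpow_of_lt (by norm_num) ha
  rw [lintegral_enorm_eq_ofReal_integral hnear_int, lintegral_enorm_eq_ofReal_integral hfar_int,
    hnear, hfar, ← ENNReal.ofReal_mul (by positivity), mul_mul_mul_comm, ← rpow_add ha]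
  · norm_num
  · filter_upwards [ae_restrict_mem measurableSet_Ioi] with u hu
      using rpow_nonneg (ha.trans hu).le _
  · filter_upwards [ae_restrict_mem measurableSet_Ioc] with t ht using rpow_nonneg ht.1.le _

/-- The real part of `u ^ (-1 / 2 + i * ξ)` for `0 < u`. These are generalized eigenfunctions of
every operator on the half-line whose kernel is symmetric and homogeneous of degree `-1`. -/
noncomputable def mellinWave (ξ u : ℝ) : ℝ := u ^ (-1 / 2 : ℝ) * cos (ξ * log u)

namespace mellinWave

variable {t u : ℝ}

theorem measurable (ξ : ℝ) : Measurable (mellinWave ξ) := by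
  unfold mellinWave
  fun_prop

theorem zero_apply (u : ℝ) : mellinWave 0 u = u ^ (-1 / 2 : ℝ) := by
  simp [mellinWave]

theorem abs_le (ξ u : ℝ) : |mellinWave ξ u| ≤ |mellinWave 0 u| := by
  rw [zero_apply, mellinWave, abs_mul]
  exact mul_le_of_le_one_right (abs_nonneg _) (abs_cos_le_one _)

theorem mul_exp (ξ : ℝ) (ht : 0 < t) (x : ℝ) :
    mellinWave ξ (t * exp x) = t ^ (-1 / 2 : ℝ) * exp (-(x / 2)) * cos (ξ * x + ξ * log t) := by
  rw [mellinWave, mul_rpow ht.le (exp_pos x).le, ← exp_mul, log_mul ht.ne' (exp_pos x).ne', log_exp]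
  ring_nf

theorem memLp_indicator (ξ L : ℝ) :
    MemLp ((Ioc 1 (exp L)).indicator (mellinWave ξ)) 2 (volume.restrict (Ioi 0)) := by
  have hpos : Ioc 1 (exp L) ∩ Ioi 0 = Ioc 1 (exp L) :=
    inter_eq_left.2 fun u hu ↦ one_pos.trans hu.1
  rw [memLp_indicator_iff_restrict measurableSet_Ioc, Measure.restrict_restrict measurableSet_Ioc,
    hpos]
  refine MemLp.of_bound (measurable ξ).aestronglyMeasurable 1 ?_
  filter_upwards [ae_restrict_mem measurableSet_Ioc] with u ⟨hu, _⟩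
  refine (abs_le ξ u).trans ?_
  rw [zero_apply, abs_of_nonneg (by positivity)]
  exact rpow_le_one_of_one_le_of_nonpos hu.le (by norm_num)

theorem norm_toLp_indicator_sq {ξ : ℝ} (hξ : ξ ≠ 0) {L : ℝ} (hL : 0 ≤ L) :
    ‖(memLp_indicator ξ L).toLp‖ ^ 2 = L / 2 + cos (ξ * L) * sin (ξ * L) / (2 * ξ) := by
  have hpull (x : ℝ) : (1 * exp x) • (Ioc 1 (exp L)).indicator (mellinWave ξ) (1 * exp x) ^ 2 =
      (Ioc 0 L).indicator (fun x ↦ cos (ξ * x) ^ 2) x := by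
    by_cases hx : x ∈ Ioc 0 L
    · have hexp : exp x * exp (-(x / 2)) ^ 2 = 1 := by
        rw [← exp_nat_mul, ← exp_add, ← exp_zero]
        ring_nf
      rw [indicator_of_mem hx, indicator_of_mem (by simpa using hx), mul_exp ξ one_pos]
      simp [mul_pow, ← mul_assoc, hexp]
    · rw [indicator_of_notMem hx, indicator_of_notMem (by simpa using hx)]
      simp
  calc ‖(memLp_indicator ξ L).toLp‖ ^ 2
      = ∫ u in Ioi 0, (Ioc 1 (exp L)).indicator (mellinWave ξ) u ^ 2 := by
        rw [← real_inner_self_eq_norm_sq, L2.inner_def]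
        refine integral_congr_ae ?_
        filter_upwards [(memLp_indicator ξ L).coeFn_toLp] with u hu
        rw [real_inner_self_eq_norm_sq, hu, norm_eq_abs, sq_abs]
    _ = ∫ x in 0..L, cos (ξ * x) ^ 2 := by
        simp only [setIntegral_Ioi_zero_eq_integral_mul_exp _ one_pos, hpull]
        rw [integral_indicator measurableSet_Ioc, intervalIntegral.integral_of_le hL]
    _ = L / 2 + cos (ξ * L) * sin (ξ * L) / (2 * ξ) := by
        rw [intervalIntegral.integral_comp_mul_left (cos · ^ 2) hξ, integral_cos_sq]
        simp only [mul_zero, cos_zero, sin_zero, sub_zero, smul_eq_mul]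
        field_simp
        ring

theorem tendsto_norm_toLp_indicator_atTop {ξ : ℝ} (hξ : ξ ≠ 0) :
    Tendsto (fun L ↦ ‖(memLp_indicator ξ L).toLp‖) atTop atTop := by
  suffices Tendsto (fun L ↦ ‖(memLp_indicator ξ L).toLp‖ ^ 2) atTop atTop by
    simpa [comp_def] using tendsto_sqrt_atTop.comp this
  have hlin : Tendsto (fun L : ℝ ↦ L / 2 + -|2 * ξ|⁻¹) atTop atTop :=
    tendsto_atTop_add_const_right _ _ (tendsto_id.atTop_div_const two_pos)
  refine tendsto_atTop_mono' _ ?_ hlin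
  filter_upwards [eventually_ge_atTop 0] with L hL
  rw [norm_toLp_indicator_sq hξ hL]
  gcongr
  refine neg_le_of_abs_le ?_
  rw [abs_div, abs_mul, div_eq_mul_inv]
  exact mul_le_of_le_one_left (by positivity)
    (mul_le_one₀ (abs_cos_le_one _) (abs_nonneg _) (abs_sin_le_one _))

end mellinWave

/-- The kernel `A₀(t, u) = 1 / (t + u)`. -/
noncomputable def hilbertKernel (t u : ℝ) : ℝ := (t + u)⁻¹

namespace hilbertKernel

variable {t u a : ℝ}

theorem symm (t u : ℝ) : hilbertKernel t u = hilbertKernel u t := by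
  rw [hilbertKernel, hilbertKernel, add_comm]

theorem measurable : Measurable (uncurry hilbertKernel) := by
  unfold hilbertKernel uncurry
  fun_prop

theorem mul_mellinWave_mul_exp (ξ : ℝ) (ht : 0 < t) (x : ℝ) :
    t * exp x * (hilbertKernel t (t * exp x) * mellinWave ξ (t * exp x)) =
      t ^ (-1 / 2 : ℝ) * (logHilbertKernel x * cos (ξ * x + ξ * log t)) := by
  have hexp : exp x = exp (x / 2) * exp (x / 2) := by rw [← exp_add, add_halves]
  rw [mellinWave.mul_exp ξ ht, hilbertKernel, logHilbertKernel, cosh_eq, exp_neg, hexp]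
  field_simp
  ring

theorem integral_mul_mellinWave (ξ : ℝ) (ht : 0 < t) :
    ∫ u in Ioi 0, hilbertKernel t u * mellinWave ξ u =
      cosTransform logHilbertKernel ξ * mellinWave ξ t := by
  rw [setIntegral_Ioi_zero_eq_integral_mul_exp _ ht]
  simp only [smul_eq_mul, mul_mellinWave_mul_exp ξ ht]
  rw [integral_const_mul, integral_mul_cos_add_of_even logHilbertKernel.integrable
    logHilbertKernel.neg_eq, mellinWave]
  ring

theorem lintegral_mul_mellinWave_zero (ht : 0 < t) :
    ∫⁻ u in Ioi 0, ‖hilbertKernel t u * mellinWave 0 u‖ₑ = NNReal.pi * ‖mellinWave 0 t‖ₑ := by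
  have hpos : 0 < mellinWave 0 t := by rw [mellinWave.zero_apply]; positivity
  have hint : ∫ u in Ioi 0, hilbertKernel t u * mellinWave 0 u = π * mellinWave 0 t := by
    rw [integral_mul_mellinWave 0 ht, logHilbertKernel.cosTransform_zero]
  have hnonneg : ∀ᵐ u ∂volume.restrict (Ioi 0), 0 ≤ hilbertKernel t u * mellinWave 0 u := by
    filter_upwards [ae_restrict_mem measurableSet_Ioi] with u (hu : 0 < u)
    rw [hilbertKernel, mellinWave.zero_apply]
    positivity
  have hne : ∫ u in Ioi 0, hilbertKernel t u * mellinWave 0 u ≠ 0 := by rw [hint]; positivity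
  rw [lintegral_enorm_eq_ofReal_integral (.of_integral_ne_zero hne) hnonneg, hint,
    ENNReal.ofReal_mul pi_nonneg, enorm_of_nonneg hpos.le, ← NNReal.coe_real_pi,
    ENNReal.ofReal_coe_nnreal]

theorem ae_lintegral_mul_mellinWave_zero_le : ∀ᵐ t ∂volume.restrict (Ioi 0),
    ∫⁻ u in Ioi 0, ‖hilbertKernel t u * mellinWave 0 u‖ₑ ≤ NNReal.pi * ‖mellinWave 0 t‖ₑ := by
  filter_upwards [ae_restrict_mem measurableSet_Ioi] with t ht
    using (lintegral_mul_mellinWave_zero ht).le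

theorem isL2BoundedKernel : IsL2BoundedKernel hilbertKernel (volume.restrict (Ioi 0))
    (volume.restrict (Ioi 0)) NNReal.pi := by
  have hw := (mellinWave.measurable 0).aemeasurable (μ := volume.restrict (Ioi 0))
  refine .of_schur measurable hw hw ?_ ae_lintegral_mul_mellinWave_zero_le
    (by simpa only [symm] using ae_lintegral_mul_mellinWave_zero_le)
  filter_upwards [ae_restrict_mem measurableSet_Ioi] with u (hu : 0 < u)
  rw [mellinWave.zero_apply]
  positivity

theorem integrableOn_exp_mul_exp (htu : 0 < t + u) :
    IntegrableOn (fun s ↦ exp (-t * s) * exp (-u * s)) (Ioi 0) := by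
  simpa [← exp_add, ← add_mul, ← neg_add_rev, add_comm] using
    integrableOn_exp_mul_Ioi (neg_neg_of_pos htu) 0

theorem integral_exp_mul_exp (htu : 0 < t + u) :
    ∫ s in Ioi 0, exp (-t * s) * exp (-u * s) = hilbertKernel t u := by
  simpa [← exp_add, ← add_mul, ← neg_add_rev, add_comm, hilbertKernel, inv_neg] using
    integral_exp_mul_Ioi (neg_neg_of_pos htu) 0

theorem isPositive_integralOperator : isL2BoundedKernel.integralOperator.IsPositive := by
  refine ⟨isL2BoundedKernel.inner_integralOperator_eq_of_swap isL2BoundedKernel symm, ?_⟩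
  have hpos : ∀ᵐ z ∂(volume.restrict (Ioi (0 : ℝ))).prod (volume.restrict (Ioi (0 : ℝ))),
      0 < z.1 + z.2 := by
    rw [Measure.prod_restrict]
    filter_upwards [ae_restrict_mem (measurableSet_Ioi.prod measurableSet_Ioi)] with z hz
      using add_pos hz.1 hz.2
  exact isL2BoundedKernel.inner_integralOperator_self_nonneg_of_factorization
    (ρ := volume.restrict (Ioi 0)) (g := fun t s ↦ exp (-t * s)) (by fun_prop)
    (fun t s ↦ (exp_pos _).le) (hpos.mono fun z ↦ integrableOn_exp_mul_exp)
    (hpos.mono fun z ↦ integral_exp_mul_exp)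

theorem enorm_mellinWave_zero_mul_le (ht : 0 < t) (hu : 0 < u) :
    ‖mellinWave 0 t * (hilbertKernel t u * mellinWave 0 u)‖ₑ ≤
      ‖t ^ (-1 / 2 : ℝ)‖ₑ * ‖u ^ (-3 / 2 : ℝ)‖ₑ := by
  have hsplit : u ^ (-3 / 2 : ℝ) = u⁻¹ * u ^ (-1 / 2 : ℝ) := by
    rw [← rpow_neg_one, ← rpow_add hu]
    norm_num
  rw [mellinWave.zero_apply, mellinWave.zero_apply, hilbertKernel, hsplit, enorm_mul, enorm_mul,
    enorm_mul]
  gcongr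
  refine enorm_le_iff_norm_le.2 ?_
  rw [norm_of_nonneg (by positivity), norm_of_nonneg (by positivity)]
  gcongr
  exact le_add_of_nonneg_left ht.le

theorem kernelFlux_Iic_Ioi_le (ha : 0 < a) :
    kernelFlux hilbertKernel (mellinWave 0) (volume.restrict (Ioi 0)) (Iic a) (Ioi a) ≤ 4 := by
  rw [kernelFlux, Measure.restrict_restrict measurableSet_Iic,
    Measure.restrict_restrict measurableSet_Ioi, Iic_inter_Ioi, Ioi_inter_Ioi, sup_of_le_left ha.le,
    ← setLIntegral_Ioc_rpow_mul_setLIntegral_Ioi_rpow ha, ← lintegral_lintegral_mul]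
  · exact setLIntegral_mono' measurableSet_Ioc fun t ht ↦ setLIntegral_mono' measurableSet_Ioi
      fun u hu ↦ enorm_mellinWave_zero_mul_le ht.1 (ha.trans hu)
  all_goals fun_prop

theorem kernelFlux_Ioc_compl_le (ha : 0 < a) {b : ℝ} (hb : 0 < b) :
    kernelFlux hilbertKernel (mellinWave 0) (volume.restrict (Ioi 0)) (Ioc a b) (Ioc a b)ᶜ ≤ 8 := by
  have hw := mellinWave.measurable 0
  rw [← Ioi_inter_Iic, compl_inter, compl_Ioi, compl_Iic]
  calc kernelFlux hilbertKernel (mellinWave 0) (volume.restrict (Ioi 0)) (Ioi a ∩ Iic b)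
        (Iic a ∪ Ioi b)
      ≤ kernelFlux hilbertKernel (mellinWave 0) (volume.restrict (Ioi 0)) (Ioi a) (Iic a) +
        kernelFlux hilbertKernel (mellinWave 0) (volume.restrict (Ioi 0)) (Iic b) (Ioi b) :=
        (kernelFlux_union_right_le measurable hw _ _ _).trans <|
          add_le_add (kernelFlux_mono inter_subset_left subset_rfl)
            (kernelFlux_mono inter_subset_right subset_rfl)
    _ ≤ 4 + 4 := by
        rw [kernelFlux_comm measurable symm hw (Ioi a)]
        exact add_le_add (kernelFlux_Iic_Ioi_le ha) (kernelFlux_Iic_Ioi_le hb)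
    _ = 8 := by norm_num

theorem norm_smul_sub_integralOperator_le (ξ L : ℝ) :
    ‖cosTransform logHilbertKernel ξ • (mellinWave.memLp_indicator ξ L).toLp -
      isL2BoundedKernel.integralOperator (mellinWave.memLp_indicator ξ L).toLp‖ ≤ √(16 * π) := by
  have hw := mellinWave.measurable 0
  have hflux := kernelFlux_Ioc_compl_le one_pos (exp_pos L)
  have heigen : ∀ᵐ t ∂volume.restrict (Ioi 0), ∫ u in Ioi 0, hilbertKernel t u * mellinWave ξ u =
      cosTransform logHilbertKernel ξ * mellinWave ξ t := by
    filter_upwards [ae_restrict_mem measurableSet_Ioi] with t ht using integral_mul_mellinWave ξ ht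
  have hle := isL2BoundedKernel.enorm_smul_sub_integralOperator_sq_le hw
    ae_lintegral_mul_mellinWave_zero_le (mellinWave.measurable ξ) (mellinWave.abs_le ξ) heigen
    measurableSet_Ioc (mellinWave.memLp_indicator ξ L)
  rw [kernelFlux_comm measurable symm hw (Ioc 1 (exp L))ᶜ] at hle
  refine le_sqrt_of_sq_le ((ENNReal.ofReal_le_ofReal_iff (by positivity)).1 ?_)
  rw [ENNReal.ofReal_pow (norm_nonneg _), ofReal_norm, ENNReal.ofReal_mul (by norm_num),
    ← NNReal.coe_real_pi, ENNReal.ofReal_coe_nnreal, mul_comm]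
  refine hle.trans ?_
  gcongr
  exact (add_le_add hflux hflux).trans_eq (by norm_num)

theorem Ioo_subset_spectrum_integralOperator :
    Ioo 0 π ⊆ spectrum ℝ isL2BoundedKernel.integralOperator := by
  intro l hl
  rw [← logHilbertKernel.cosTransform_zero] at hl
  obtain ⟨ξ, hξ, rfl⟩ := exists_ne_zero_cosTransform_eq logHilbertKernel.integrable hl
  exact mem_spectrum_of_norm_smul_sub_le (mellinWave.tendsto_norm_toLp_indicator_atTop hξ)
    (.of_forall (norm_smul_sub_integralOperator_le ξ))

theorem Icc_subset_spectrum_integralOperator :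
    Icc 0 π ⊆ spectrum ℝ isL2BoundedKernel.integralOperator := by
  rw [← closure_Ioo pi_pos.ne]
  exact closure_minimal Ioo_subset_spectrum_integralOperator (spectrum.isClosed _)

theorem norm_integralOperator : ‖isL2BoundedKernel.integralOperator‖ = π := by
  refine le_antisymm isL2BoundedKernel.norm_integralOperator_le ?_
  exact (spectrum_subset_Icc_of_isPositive isPositive_integralOperator
    (Icc_subset_spectrum_integralOperator (right_mem_Icc.2 pi_nonneg))).2

theorem spectrum_integralOperator :
    spectrum ℝ isL2BoundedKernel.integralOperator = Icc 0 π := by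
  refine Subset.antisymm ?_ Icc_subset_spectrum_integralOperator
  simpa only [norm_integralOperator] using
    spectrum_subset_Icc_of_isPositive isPositive_integralOperator

end hilbertKernel

theorem hilbert_operator_norm_and_spectrum :
    ∃ A : Lp ℝ 2 (volume.restrict (Set.Ioi (0:ℝ))) →L[ℝ]
          Lp ℝ 2 (volume.restrict (Set.Ioi (0:ℝ))),
      (∀ φ : Lp ℝ 2 (volume.restrict (Set.Ioi (0:ℝ))),
        (A φ : ℝ → ℝ) =ᵐ[volume.restrict (Set.Ioi (0:ℝ))]
          fun t => ∫ u in Set.Ioi (0:ℝ), φ u / (t + u)) ∧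
      (∀ φ ψ : Lp ℝ 2 (volume.restrict (Set.Ioi (0:ℝ))), ⟪A φ, ψ⟫ = ⟪φ, A ψ⟫) ∧
      (∀ φ : Lp ℝ 2 (volume.restrict (Set.Ioi (0:ℝ))), 0 ≤ ⟪A φ, φ⟫) ∧
      ‖A‖ = π ∧
      spectrum ℝ A = Set.Icc 0 π := by
  refine ⟨hilbertKernel.isL2BoundedKernel.integralOperator, fun φ ↦ ?_,
    hilbertKernel.isPositive_integralOperator.isSymmetric,
    hilbertKernel.isPositive_integralOperator.2, hilbertKernel.norm_integralOperator,
    hilbertKernel.spectrum_integralOperator⟩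
  simpa only [hilbertKernel, div_eq_inv_mul] using
    hilbertKernel.isL2BoundedKernel.coeFn_integralOperator φ
end

section
/- The map U : L²((0,∞)) → L²(ℝ) defined by (Uφ)(v) = e^{v/2} φ(e^v) is a unitary isomorphism, and it conjugates the operator A₀ with kernel 1/(t+u) into the convolution operator with kernel 1/(2 cosh(v/2)): for every φ ∈ L²((0,∞)) one has (U A₀ φ)(v) = ∫_ℝ (Uφ)(s)/(2 cosh((v−s)/2)) ds for almost every v ∈ ℝ. -/
open MeasureTheory Real Set

/-!
The substitution `t = exp v` carries `exp v dv` to `dt` on `(0, ∞)`, so the weight `exp (v / p)`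
compensates the Jacobian in the `L^p` norm. For the kernel, dividing numerator and denominator of
`exp (a * v) * exp s / (exp v + exp s)` by `exp ((v + s) / 2)` leaves `2 * cosh ((v - s) / 2)` below
and a function of `v - s` times `exp (a * s)` above.
-/

open scoped ENNReal

variable {𝕜 E : Type*} [NormedAddCommGroup E]

section ExpChangeOfVariables

lemma lintegral_comp_exp (g : ℝ → ℝ≥0∞) :
    ∫⁻ v, ENNReal.ofReal (exp v) * g (exp v) = ∫⁻ t in Ioi 0, g t := by
  simpa only [image_univ, range_exp, abs_exp, Measure.restrict_univ] using
    (lintegral_image_eq_lintegral_abs_deriv_mul MeasurableSet.univ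
      (fun v _ => (hasDerivAt_exp v).hasDerivWithinAt) exp_injective.injOn g).symm

lemma integral_comp_exp [NormedSpace ℝ E] (g : ℝ → E) :
    ∫ v, exp v • g (exp v) = ∫ t in Ioi 0, g t := by
  simpa only [image_univ, range_exp, abs_exp, Measure.restrict_univ] using
    (integral_image_eq_integral_abs_deriv_smul MeasurableSet.univ
      (fun v _ => (hasDerivAt_exp v).hasDerivWithinAt) exp_injective.injOn g).symm

lemma map_exp_withDensity_exp :
    (volume.withDensity fun v => ENNReal.ofReal (exp v)).map exp = volume.restrict (Ioi 0) := by
  ext s hs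
  rw [Measure.map_apply measurable_exp hs, withDensity_apply _ (measurable_exp hs),
    ← lintegral_indicator_one hs, ← lintegral_comp_exp, ← lintegral_indicator (measurable_exp hs)]
  congr with v
  by_cases hv : exp v ∈ s <;> simp [hv]

lemma map_exp_absolutelyContinuous : volume.map exp ≪ volume.restrict (Ioi 0) := by
  rw [← map_exp_withDensity_exp]
  refine (withDensity_absolutelyContinuous' (by fun_prop) ?_).map measurable_exp
  exact ae_of_all _ fun v => (ENNReal.ofReal_pos.2 (exp_pos v)).ne'

lemma absolutelyContinuous_map_exp : volume.restrict (Ioi 0) ≪ volume.map exp := by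
  rw [← map_exp_withDensity_exp]
  exact (withDensity_absolutelyContinuous _ _).map measurable_exp

lemma aestronglyMeasurable_comp_exp_iff {X : Type*} [TopologicalSpace X] {f : ℝ → X} :
    AEStronglyMeasurable (f ∘ exp) volume ↔ AEStronglyMeasurable f (volume.restrict (Ioi 0)) := by
  rw [← isOpenEmbedding_exp.measurableEmbedding.aestronglyMeasurable_map_iff]
  exact ⟨fun hf => hf.mono_ac absolutelyContinuous_map_exp,
    fun hf => hf.mono_ac map_exp_absolutelyContinuous⟩

end ExpChangeOfVariables

variable [NormedSpace ℝ E]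

/-- The function `f` on `(0, ∞)` in the coordinate `v = log t`, weighted by `exp (a * v)`.
The choice of exponent that makes this an isometry of `L^p` spaces is `a = 1 / p`. -/
noncomputable def logPullback (a : ℝ) (f : ℝ → E) (v : ℝ) : E := exp (a * v) • f (exp v)

namespace logPullback

variable (a : ℝ) {f g : ℝ → E} {p : ℝ≥0∞}

lemma add (f g : ℝ → E) : logPullback a (f + g) = logPullback a f + logPullback a g :=
  funext fun _ => smul_add _ _ _

lemma const_smul [SMul 𝕜 E] [SMulCommClass ℝ 𝕜 E] (c : 𝕜) (f : ℝ → E) :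
    logPullback a (c • f) = c • logPullback a f :=
  funext fun _ => smul_comm _ _ _

lemma congr_ae (hfg : f =ᵐ[volume.restrict (Ioi 0)] g) :
    logPullback a f =ᵐ[volume] logPullback a g := by
  have hexp : f ∘ exp =ᵐ[volume] g ∘ exp :=
    ae_of_ae_map measurable_exp.aemeasurable (map_exp_absolutelyContinuous.ae_le hfg)
  filter_upwards [hexp] with v hv using congrArg (exp (a * v) • ·) hv

lemma exp_neg_mul_log_smul_comp_log (g : ℝ → E) :
    logPullback a (fun t => exp (-(a * log t)) • g (log t)) = g := by
  funext v
  simp only [logPullback, log_exp, smul_smul, ← exp_add, add_neg_cancel, exp_zero, one_smul]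

lemma aestronglyMeasurable_iff :
    AEStronglyMeasurable (logPullback a f) volume ↔
      AEStronglyMeasurable f (volume.restrict (Ioi 0)) := by
  have hweight (b : ℝ) : AEStronglyMeasurable (fun v => exp (b * v)) volume := by fun_prop
  rw [← aestronglyMeasurable_comp_exp_iff]
  refine ⟨fun hf => ((hweight (-a)).smul hf).congr (ae_of_all _ fun v => ?_), (hweight a).smul⟩
  simp [logPullback, smul_smul, ← exp_add]

lemma eLpNorm_eq (hp : p ≠ ∞) (f : ℝ → E) :
    eLpNorm (logPullback p.toReal⁻¹ f) p volume = eLpNorm f p (volume.restrict (Ioi 0)) := by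
  rcases eq_or_ne p 0 with rfl | hp0
  · simp only [eLpNorm_exponent_zero]
  have hp_pos : 0 < p.toReal := ENNReal.toReal_pos hp0 hp
  have henorm (v : ℝ) : ‖logPullback p.toReal⁻¹ f v‖ₑ ^ p.toReal =
      ENNReal.ofReal (exp v) * ‖f (exp v)‖ₑ ^ p.toReal := by
    rw [logPullback, enorm_smul, ENNReal.mul_rpow_of_nonneg _ _ hp_pos.le,
      enorm_of_nonneg (exp_pos _).le, ENNReal.ofReal_rpow_of_pos (exp_pos _), ← exp_mul,
      mul_right_comm, inv_mul_cancel₀ hp_pos.ne', one_mul]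
  simp only [eLpNorm_eq_lintegral_rpow_enorm_toReal hp0 hp, henorm,
    lintegral_comp_exp fun t => ‖f t‖ₑ ^ p.toReal]

lemma memLp_iff (hp : p ≠ ∞) :
    MemLp (logPullback p.toReal⁻¹ f) p volume ↔ MemLp f p (volume.restrict (Ioi 0)) := by
  rw [MemLp, MemLp, aestronglyMeasurable_iff, eLpNorm_eq hp]

variable [NormedRing 𝕜] [Module 𝕜 E] [IsBoundedSMul 𝕜 E] [SMulCommClass ℝ 𝕜 E] [Fact (1 ≤ p)]

variable (𝕜) in
/-- `logPullback` with exponent `1 / p` as a linear isometry from `L^p((0, ∞))` to `L^p(ℝ)`. -/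
noncomputable def lpₗᵢ (hp : p ≠ ∞) :
    Lp E p (volume.restrict (Ioi (0 : ℝ))) →ₗᵢ[𝕜] Lp E p (volume : Measure ℝ) where
  toFun φ := ((memLp_iff hp).2 (Lp.memLp φ)).toLp _
  map_add' φ ψ := by
    rw [← MemLp.toLp_add]
    refine MemLp.toLp_congr _ _ ?_
    rw [← add]
    exact congr_ae _ (Lp.coeFn_add φ ψ)
  map_smul' c φ := by
    rw [RingHom.id_apply, ← MemLp.toLp_const_smul]
    refine MemLp.toLp_congr _ _ ?_
    rw [← const_smul]
    exact congr_ae _ (Lp.coeFn_smul c φ)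
  norm_map' φ := by
    refine (Lp.norm_toLp _ ((memLp_iff hp).2 (Lp.memLp φ))).trans ?_
    rw [eLpNorm_eq hp, Lp.norm_def]

lemma coeFn_lpₗᵢ (hp : p ≠ ∞) (φ : Lp E p (volume.restrict (Ioi (0 : ℝ)))) :
    lpₗᵢ 𝕜 hp φ =ᵐ[volume] logPullback p.toReal⁻¹ φ :=
  ((memLp_iff hp).2 (Lp.memLp φ)).coeFn_toLp

lemma lpₗᵢ_surjective (hp : p ≠ ∞) :
    Function.Surjective (lpₗᵢ 𝕜 (E := E) hp) := by
  intro ψ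
  have hψ := exp_neg_mul_log_smul_comp_log p.toReal⁻¹ ψ
  have hmem : MemLp (fun t => exp (-(p.toReal⁻¹ * log t)) • ψ (log t)) p
      (volume.restrict (Ioi 0)) := by
    rw [← memLp_iff hp, hψ]
    exact Lp.memLp ψ
  refine ⟨hmem.toLp _, Lp.ext ?_⟩
  calc lpₗᵢ 𝕜 hp (hmem.toLp _)
      =ᵐ[volume] logPullback p.toReal⁻¹ (hmem.toLp _) := coeFn_lpₗᵢ hp _
    _ =ᵐ[volume] logPullback p.toReal⁻¹ _ := congr_ae _ hmem.coeFn_toLp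
    _ = ψ := hψ

end logPullback

lemma exp_add_exp (v s : ℝ) :
    exp v + exp s = exp ((v + s) / 2) * (2 * cosh ((v - s) / 2)) := by
  rw [cosh_eq, mul_div_cancel₀ _ two_ne_zero, mul_add, ← exp_add, ← exp_add]
  ring_nf

lemma exp_mul_exp_div_exp_add_exp (a v s : ℝ) :
    exp (a * v) * exp s / (exp v + exp s) =
      exp ((a - 1 / 2) * (v - s)) / (2 * cosh ((v - s) / 2)) * exp (a * s) := by
  have hnumerator : exp (a * v) * exp s =
      exp ((v + s) / 2) * (exp ((a - 1 / 2) * (v - s)) * exp (a * s)) := by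
    simp only [← exp_add]
    ring_nf
  rw [hnumerator, exp_add_exp, mul_div_mul_left _ _ (exp_ne_zero _), div_mul_eq_mul_div]

lemma logPullback_hilbertKernel (a : ℝ) (f : ℝ → E) (v : ℝ) :
    logPullback a (fun t => ∫ u in Ioi 0, (t + u)⁻¹ • f u) v =
      ∫ s, (exp ((a - 1 / 2) * (v - s)) / (2 * cosh ((v - s) / 2))) • logPullback a f s := by
  simp only [logPullback]
  rw [← integral_comp_exp, ← integral_smul]
  simp only [smul_smul, ← exp_mul_exp_div_exp_add_exp]
  simp only [div_eq_mul_inv, mul_assoc]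

theorem log_coordinates_unitary_general [NormedRing 𝕜] [Module 𝕜 E] [IsBoundedSMul 𝕜 E]
    [SMulCommClass ℝ 𝕜 E] {p : ℝ≥0∞} [Fact (1 ≤ p)] (hp : p ≠ ∞) :
    ∃ U : Lp E p (volume.restrict (Ioi (0 : ℝ))) ≃ₗᵢ[𝕜] Lp E p (volume : Measure ℝ),
      (∀ φ, U φ =ᵐ[volume] fun v => exp (p.toReal⁻¹ * v) • φ (exp v)) ∧
      ∀ (φ : Lp E p (volume.restrict (Ioi (0 : ℝ)))) (v : ℝ),
        exp (p.toReal⁻¹ * v) • ∫ u in Ioi 0, (exp v + u)⁻¹ • φ u =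
          ∫ s, (exp ((p.toReal⁻¹ - 1 / 2) * (v - s)) / (2 * cosh ((v - s) / 2))) •
            exp (p.toReal⁻¹ * s) • φ (exp s) :=
  ⟨.ofSurjective (logPullback.lpₗᵢ 𝕜 hp) (logPullback.lpₗᵢ_surjective hp),
    logPullback.coeFn_lpₗᵢ hp, fun φ => logPullback_hilbertKernel _ φ⟩

theorem log_coordinates_unitary :
    ∃ U : Lp ℝ 2 (volume.restrict (Set.Ioi (0:ℝ))) ≃ₗᵢ[ℝ] Lp ℝ 2 (volume : Measure ℝ),
      (∀ φ : Lp ℝ 2 (volume.restrict (Set.Ioi (0:ℝ))),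
        (U φ : ℝ → ℝ) =ᵐ[volume] fun v => Real.exp (v/2) * φ (Real.exp v)) ∧
      (∀ φ : Lp ℝ 2 (volume.restrict (Set.Ioi (0:ℝ))),
        ∀ᵐ v ∂(volume : Measure ℝ),
          Real.exp (v/2) * ∫ u in Set.Ioi (0:ℝ), φ u / (Real.exp v + u) =
            ∫ s, (Real.exp (s/2) * φ (Real.exp s)) / (2 * Real.cosh ((v - s)/2))) := by
  obtain ⟨U, hU, hconj⟩ := log_coordinates_unitary_general (𝕜 := ℝ) (E := ℝ) (p := 2)
    ENNReal.ofNat_ne_top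
  exact ⟨U, by simpa [div_eq_inv_mul] using hU,
    fun φ => ae_of_all _ fun v => by simpa [div_eq_inv_mul] using hconj φ v⟩
end

section
/- Let α ∈ (0,1). For every x ≥ 0 the series Σ_{n=0}^∞ α^{2n} A_n(x) converges absolutely and equals G_α(x) := ₂F₁(α, −α; 1; −x), where G_α(x) = (1/(Γ(α)Γ(1−α))) ∫₀¹ u^{α−1}(1−u)^{−α}(1+xu)^{α} du. -/
open MeasureTheory Real Set

/-- The hyperlogarithm `Hlog(x,[0,-1,…,0,-1])` with `n` alternating letter pairs `(0,-1)`,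
defined recursively together with `Bfun`. -/
noncomputable def Afun : ℕ → ℝ → ℝ
  | 0 => fun _ => 1
  | n+1 => fun x => ∫ t in (0:ℝ)..x, (∫ s in (0:ℝ)..t, Afun n s / (1 + s)) / t

/-- The hyperlogarithm `Hlog(x,[-1,0,-1,…,0,-1])`: the letter `-1` followed by `n`
alternating pairs `(0,-1)`. -/
noncomputable def Bfun (n : ℕ) (x : ℝ) : ℝ := ∫ t in (0:ℝ)..x, Afun n t / (1 + t)

/-- The Gauss hypergeometric function `₂F₁(α, -α; 1; -x)` via its Euler integral. -/
noncomputable def Ghyp (α x : ℝ) : ℝ :=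
  (1 / (Real.Gamma α * Real.Gamma (1 - α))) *
    ∫ u in (0:ℝ)..1, u ^ (α - 1) * (1 - u) ^ (-α) * (1 + x * u) ^ α

open scoped Interval Nat Topology

/-!
Let `T` be the operator `f ↦ ∫₀ˣ (∫₀ᵗ f(s) / (1 + s) ds) / t dt`, so that `Aₙ = Tⁿ 1` and
`∑ α²ⁿ Aₙ` is the Neumann series of the integral equation `G = 1 + α² T G`. Each application of `T`
integrates twice away from `0`, so `Tⁿ f(x)` is bounded by `C rⁿ / n!²`; the series therefore
converges to any continuous solution `G`. Since `T` inverts the operator `(1 + x) d/dx x d/dx` on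
functions vanishing at `0`, the integral equation amounts to the hypergeometric equation
`(1 + x) (x G')' = α² G` with `G(0) = 1`. Euler's integral satisfies it because of the contiguous
relations between its parameters and one integration by parts, in which the boundary terms vanish.
-/

section IntervalIntegral

variable {E : Type*} [NormedAddCommGroup E] [NormedSpace ℝ E] {a b : ℝ}

lemma norm_integral_le_of_norm_le_mul_abs_sub_pow {f : ℝ → E} {C : ℝ} {n : ℕ}
    (h : ∀ t ∈ uIoo a b, ‖f t‖ ≤ C * |t - a| ^ n) :
    ‖∫ t in a..b, f t‖ ≤ C * |b - a| ^ (n + 1) / (n + 1) := by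
  have hint : IntegrableOn (fun t ↦ C * |t - a| ^ n) (Ι a b) :=
    (Continuous.intervalIntegrable (by fun_prop) a b).def'
  have hle : ∀ᵐ t ∂volume.restrict (Ι a b), ‖f t‖ ≤ C * |t - a| ^ n := by
    rw [ae_restrict_iff' measurableSet_uIoc]
    filter_upwards [volume.ae_ne (a ⊔ b)] with t ht htab
    exact h t ⟨htab.1, htab.2.lt_of_ne ht⟩
  calc ‖∫ t in a..b, f t‖ = ‖∫ t in Ι a b, f t‖ :=
        intervalIntegral.norm_integral_eq_norm_integral_uIoc f
    _ ≤ ∫ t in Ι a b, C * |t - a| ^ n := norm_integral_le_of_norm_le hint hle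
    _ = C * |b - a| ^ (n + 1) / (n + 1) := by
        rw [integral_const_mul, integral_pow_abs_sub_uIoc, mul_div_assoc]

lemma hasDerivAt_integral_of_continuousOn [CompleteSpace E] {f : ℝ → E} {s : Set ℝ}
    (hs : IsOpen s) (hsc : s.OrdConnected) (hf : ContinuousOn f s) (ha : a ∈ s) (hb : b ∈ s) :
    HasDerivAt (fun x ↦ ∫ t in a..x, f t) (f b) b :=
  intervalIntegral.integral_hasDerivAt_right
    (hf.mono (hsc.uIcc_subset ha hb)).intervalIntegrable
    (hf.stronglyMeasurableAtFilter hs b hb) (hf.continuousAt (hs.mem_nhds hb))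

lemma hasDerivAt_integral_mul_of_continuousOn {w : ℝ → ℝ} {K K' : ℝ → ℝ → ℝ} {s : Set ℝ} {x : ℝ}
    (hw : IntervalIntegrable w volume a b) (hs : s ∈ nhds x)
    (hK : ∀ y ∈ s, ContinuousOn (K y) (uIcc a b))
    (hK' : ContinuousOn (Function.uncurry K') (s ×ˢ uIcc a b))
    (hderiv : ∀ y ∈ s, ∀ u ∈ uIcc a b, HasDerivAt (fun z ↦ K z u) (K' y u) y) :
    HasDerivAt (fun y ↦ ∫ u in a..b, w u * K y u) (∫ u in a..b, w u * K' x u) x := by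
  obtain ⟨t, ht, hts, htc⟩ := local_compact_nhds hs
  obtain ⟨C, hC⟩ := (htc.prod isCompact_uIcc).exists_bound_of_continuousOn
    (hK'.mono (prod_mono_left hts))
  have hint : ∀ y ∈ s, IntervalIntegrable (fun u ↦ w u * K y u) volume a b :=
    fun y hy ↦ hw.mul_continuousOn (hK y hy)
  have hK'x : ContinuousOn (K' x) (uIcc a b) :=
    hK'.comp (by fun_prop : ContinuousOn (fun u ↦ (x, u)) _)
      fun u hu ↦ ⟨mem_of_mem_nhds hs, hu⟩
  refine (intervalIntegral.hasDerivAt_integral_of_dominated_loc_of_deriv_le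
    (F' := fun y u ↦ w u * K' y u) (bound := fun u ↦ |w u| * C) ht ?_
    (hint x (mem_of_mem_nhds hs)) (hw.mul_continuousOn hK'x).def'.aestronglyMeasurable
    ?_ (hw.abs.mul_const C) ?_).2
  · filter_upwards [hs] with y hy using (hint y hy).def'.aestronglyMeasurable
  · refine .of_forall fun u hu y hy ↦ ?_
    rw [norm_mul]
    exact mul_le_mul_of_nonneg_left (hC (y, u) ⟨hy, uIoc_subset_uIcc hu⟩) (norm_nonneg _)
  · exact .of_forall fun u hu y hy ↦ (hderiv y (hts hy) u (uIoc_subset_uIcc hu)).const_mul _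

end IntervalIntegral

section HyperlogarithmOperators

/-- The operator `Hlog(·, w) ↦ Hlog(·, -1 w)` prepending the letter `-1` to a word. -/
noncomputable def hlogNegOne (f : ℝ → ℝ) (x : ℝ) : ℝ := ∫ t in (0 : ℝ)..x, f t / (1 + t)

/-- The operator `Hlog(·, w) ↦ Hlog(·, 0 -1 w)` prepending the letter pair `(0, -1)` to a word.
The junk value `hlogNegOne f 0 / 0 = 0` of the integrand is harmless, being taken on a null set. -/
noncomputable def hlogPair (f : ℝ → ℝ) (x : ℝ) : ℝ := ∫ t in (0 : ℝ)..x, hlogNegOne f t / t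

variable {f g : ℝ → ℝ} {x : ℝ}

lemma Afun_eq_iterate_hlogPair (n : ℕ) : Afun n = hlogPair^[n] (fun _ ↦ 1) := by
  induction n with
  | zero => rfl
  | succ n ih => rw [Function.iterate_succ_apply', ← ih]; rfl

@[simp]
lemma hlogNegOne_zero (f : ℝ → ℝ) : hlogNegOne f 0 = 0 := intervalIntegral.integral_same

lemma uIcc_zero_subset_Ioi_neg_one (hx : -1 < x) : uIcc 0 x ⊆ Ioi (-1) :=
  ordConnected_Ioi.uIcc_subset neg_one_lt_zero hx

lemma continuousOn_div_one_add (hf : ContinuousOn f (Ioi (-1))) :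
    ContinuousOn (fun t ↦ f t / (1 + t)) (Ioi (-1)) :=
  hf.div (by fun_prop) fun t ht ↦ by linarith [mem_Ioi.mp ht]

lemma hasDerivAt_hlogNegOne (hf : ContinuousOn f (Ioi (-1))) (hx : -1 < x) :
    HasDerivAt (hlogNegOne f) (f x / (1 + x)) x :=
  hasDerivAt_integral_of_continuousOn isOpen_Ioi ordConnected_Ioi (continuousOn_div_one_add hf)
    (mem_Ioi.mpr neg_one_lt_zero) hx

/- Passing to `dslope` removes the singularity of the outer integrand at `0`. -/
lemma hlogPair_eq_integral_dslope (f : ℝ → ℝ) (x : ℝ) :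
    hlogPair f x = ∫ t in (0 : ℝ)..x, dslope (hlogNegOne f) 0 t := by
  refine intervalIntegral.integral_congr_uIoo fun t ht ↦ ?_
  rw [dslope_of_ne _ (ne_of_mem_of_not_mem ht left_notMem_uIoo), slope_def_field,
    hlogNegOne_zero, sub_zero, sub_zero]

lemma continuousOn_dslope_hlogNegOne (hf : ContinuousOn f (Ioi (-1))) :
    ContinuousOn (dslope (hlogNegOne f) 0) (Ioi (-1)) :=
  (continuousOn_dslope (Ioi_mem_nhds neg_one_lt_zero)).mpr
    ⟨fun _ ht ↦ (hasDerivAt_hlogNegOne hf ht).continuousAt.continuousWithinAt,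
      (hasDerivAt_hlogNegOne hf neg_one_lt_zero).differentiableAt⟩

lemma continuousOn_hlogPair (hf : ContinuousOn f (Ioi (-1))) :
    ContinuousOn (hlogPair f) (Ioi (-1)) := by
  rw [funext (hlogPair_eq_integral_dslope f)]
  exact fun t ht ↦ (hasDerivAt_integral_of_continuousOn isOpen_Ioi ordConnected_Ioi
    (continuousOn_dslope_hlogNegOne hf)
    (mem_Ioi.mpr neg_one_lt_zero) ht).continuousAt.continuousWithinAt

lemma hlogNegOne_congr (h : EqOn f g (Ioi (-1))) :
    EqOn (hlogNegOne f) (hlogNegOne g) (Ioi (-1)) := fun x hx ↦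
  intervalIntegral.integral_congr fun t ht ↦ by
    simp only [h (uIcc_zero_subset_Ioi_neg_one hx ht)]

lemma hlogPair_congr (h : EqOn f g (Ioi (-1))) :
    EqOn (hlogPair f) (hlogPair g) (Ioi (-1)) := fun x hx ↦
  intervalIntegral.integral_congr fun t ht ↦ by
    simp only [hlogNegOne_congr h (uIcc_zero_subset_Ioi_neg_one hx ht)]

lemma hlogNegOne_const_mul (c : ℝ) (f : ℝ → ℝ) :
    hlogNegOne (fun t ↦ c * f t) = fun t ↦ c * hlogNegOne f t := by
  ext x
  simp only [hlogNegOne, mul_div_assoc, intervalIntegral.integral_const_mul]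

lemma hlogPair_const_mul (c : ℝ) (f : ℝ → ℝ) :
    hlogPair (fun t ↦ c * f t) = fun t ↦ c * hlogPair f t := by
  ext x
  simp only [hlogPair, hlogNegOne_const_mul, mul_div_assoc, intervalIntegral.integral_const_mul]

lemma hlogNegOne_add (hf : ContinuousOn f (Ioi (-1))) (hg : ContinuousOn g (Ioi (-1)))
    (hx : -1 < x) :
    hlogNegOne (fun t ↦ f t + g t) x = hlogNegOne f x + hlogNegOne g x := by
  have hint {h : ℝ → ℝ} (hh : ContinuousOn h (Ioi (-1))) :
      IntervalIntegrable (fun t ↦ h t / (1 + t)) volume 0 x :=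
    ((continuousOn_div_one_add hh).mono (uIcc_zero_subset_Ioi_neg_one hx)).intervalIntegrable
  simp only [hlogNegOne, add_div, intervalIntegral.integral_add (hint hf) (hint hg)]

lemma hlogPair_add (hf : ContinuousOn f (Ioi (-1))) (hg : ContinuousOn g (Ioi (-1)))
    (hx : -1 < x) :
    hlogPair (fun t ↦ f t + g t) x = hlogPair f x + hlogPair g x := by
  have hint {h : ℝ → ℝ} (hh : ContinuousOn h (Ioi (-1))) :
      IntervalIntegrable (dslope (hlogNegOne h) 0) volume 0 x :=
    ((continuousOn_dslope_hlogNegOne hh).mono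
      (uIcc_zero_subset_Ioi_neg_one hx)).intervalIntegrable
  rw [hlogPair_eq_integral_dslope f, hlogPair_eq_integral_dslope g,
    ← intervalIntegral.integral_add (hint hf) (hint hg)]
  refine intervalIntegral.integral_congr_uIoo fun t ht ↦ ?_
  simp only [dslope_of_ne _ (ne_of_mem_of_not_mem ht left_notMem_uIoo), slope_def_field,
    hlogNegOne_zero, sub_zero, ← add_div,
    hlogNegOne_add hf hg (uIcc_zero_subset_Ioi_neg_one hx (uIoo_subset_uIcc_self ht))]

lemma continuousOn_iterate_hlogPair (hf : ContinuousOn f (Ioi (-1))) (n : ℕ) :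
    ContinuousOn (hlogPair^[n] f) (Ioi (-1)) := by
  induction n with
  | zero => exact hf
  | succ n ih => rw [Function.iterate_succ_apply']; exact continuousOn_hlogPair ih

lemma iterate_hlogPair_congr (h : EqOn f g (Ioi (-1))) (n : ℕ) :
    EqOn (hlogPair^[n] f) (hlogPair^[n] g) (Ioi (-1)) := by
  induction n with
  | zero => exact h
  | succ n ih => simpa only [Function.iterate_succ_apply'] using hlogPair_congr ih

lemma iterate_hlogPair_add_const_mul (hf : ContinuousOn f (Ioi (-1)))
    (hg : ContinuousOn g (Ioi (-1))) (c : ℝ) (n : ℕ) :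
    EqOn (hlogPair^[n] fun t ↦ f t + c * g t) (fun t ↦ hlogPair^[n] f t + c * hlogPair^[n] g t)
      (Ioi (-1)) := by
  induction n with
  | zero => exact fun _ _ ↦ rfl
  | succ n ih =>
    intro x hx
    simp only [Function.iterate_succ_apply']
    rw [hlogPair_congr ih hx, hlogPair_add (continuousOn_iterate_hlogPair hf n)
      ((continuousOn_iterate_hlogPair hg n).const_mul c) hx, hlogPair_const_mul]

lemma hlogPair_eq_sub_of_hasDerivAt {G : ℝ → ℝ} (hf : ContinuousOn f (Ioi (-1)))
    (hg : ContinuousOn g (Ioi (-1))) (hG : ∀ t, -1 < t → HasDerivAt G (g t) t)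
    (hfg : ∀ t, -1 < t → HasDerivAt (fun s ↦ s * g s) (f t / (1 + t)) t) (hx : -1 < x) :
    hlogPair f x = G x - G 0 := by
  have hNegOne : ∀ t, -1 < t → hlogNegOne f t = t * g t := by
    intro t ht
    have hsub := uIcc_zero_subset_Ioi_neg_one ht
    rw [hlogNegOne, intervalIntegral.integral_eq_sub_of_hasDerivAt (fun s hs ↦ hfg s (hsub hs))
      ((continuousOn_div_one_add hf).mono hsub).intervalIntegrable, zero_mul, sub_zero]
  have hsub := uIcc_zero_subset_Ioi_neg_one hx
  calc hlogPair f x = ∫ t in (0 : ℝ)..x, g t := by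
        refine intervalIntegral.integral_congr_uIoo fun t ht ↦ ?_
        simp only [hNegOne t (hsub (uIoo_subset_uIcc_self ht))]
        exact mul_div_cancel_left₀ _ (ne_of_mem_of_not_mem ht left_notMem_uIoo)
    _ = G x - G 0 := intervalIntegral.integral_eq_sub_of_hasDerivAt
        (fun t ht ↦ hG t (hsub ht)) (hg.mono hsub).intervalIntegrable

end HyperlogarithmOperators

section NeumannSeries

variable {f G : ℝ → ℝ} {x : ℝ}

lemma abs_hlogPair_le {C δ : ℝ} {n : ℕ} (hδ : 0 < δ) (hδx : ∀ t ∈ uIcc 0 x, δ ≤ 1 + t)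
    (hf : ∀ t ∈ uIcc 0 x, |f t| ≤ C * |t| ^ n) :
    ∀ t ∈ uIcc 0 x, |hlogPair f t| ≤ C / δ / (n + 1) ^ 2 * |t| ^ (n + 1) := by
  have hsub {t s : ℝ} (ht : t ∈ uIcc 0 x) (hs : s ∈ uIoo 0 t) : s ∈ uIcc 0 x :=
    uIcc_subset_uIcc left_mem_uIcc ht (uIoo_subset_uIcc_self hs)
  have hNegOne : ∀ t ∈ uIcc 0 x, |hlogNegOne f t| ≤ C / δ / (n + 1) * |t| ^ (n + 1) := by
    intro t ht
    have hle : ∀ s ∈ uIoo 0 t, ‖f s / (1 + s)‖ ≤ C / δ * |s - 0| ^ n := by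
      intro s hs
      have hδs := hδx s (hsub ht hs)
      have hCs := hf s (hsub ht hs)
      rw [norm_div, norm_eq_abs, norm_of_nonneg (hδ.le.trans hδs), sub_zero, div_mul_eq_mul_div]
      exact div_le_div₀ ((abs_nonneg _).trans hCs) hCs hδ hδs
    have := norm_integral_le_of_norm_le_mul_abs_sub_pow hle
    rwa [sub_zero, mul_div_right_comm] at this
  intro t ht
  have hle : ∀ s ∈ uIoo 0 t, ‖hlogNegOne f s / s‖ ≤ C / δ / (n + 1) * |s - 0| ^ n := by
    intro s hs
    have hs0 : s ≠ 0 := ne_of_mem_of_not_mem hs left_notMem_uIoo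
    rw [norm_div, norm_eq_abs, norm_eq_abs, sub_zero, div_le_iff₀ (abs_pos.mpr hs0), mul_assoc,
      ← pow_succ]
    exact hNegOne s (hsub ht hs)
  refine (norm_integral_le_of_norm_le_mul_abs_sub_pow hle).trans_eq ?_
  rw [sub_zero]
  field_simp

lemma abs_iterate_hlogPair_le {C δ : ℝ} (hδ : 0 < δ) (hδx : ∀ t ∈ uIcc 0 x, δ ≤ 1 + t)
    (hf : ∀ t ∈ uIcc 0 x, |f t| ≤ C) (n : ℕ) :
    ∀ t ∈ uIcc 0 x, |hlogPair^[n] f t| ≤ C / δ ^ n / n ! ^ 2 * |t| ^ n := by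
  induction n with
  | zero => simpa using hf
  | succ n ih =>
    intro t ht
    rw [Function.iterate_succ_apply']
    refine (abs_hlogPair_le hδ hδx ih t ht).trans_eq ?_
    rw [Nat.factorial_succ, pow_succ δ]
    push_cast
    field_simp

lemma exists_abs_iterate_hlogPair_le (hf : ContinuousOn f (Ioi (-1))) (hx : -1 < x) :
    ∃ C r : ℝ, ∀ n, |hlogPair^[n] f x| ≤ C * (r ^ n / n !) := by
  obtain ⟨C, hC⟩ := isCompact_uIcc.exists_bound_of_continuousOn
    (hf.mono (uIcc_zero_subset_Ioi_neg_one hx))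
  have hC0 : 0 ≤ C := (norm_nonneg _).trans (hC 0 left_mem_uIcc)
  have hδ : 0 < 1 + 0 ⊓ x := by linarith [lt_inf_iff.mpr ⟨neg_one_lt_zero, hx⟩]
  refine ⟨C, |x| / (1 + 0 ⊓ x), fun n ↦ ?_⟩
  have hfact : (1 : ℝ) ≤ n ! := mod_cast n.factorial_pos
  calc |hlogPair^[n] f x| ≤ C / (1 + 0 ⊓ x) ^ n / n ! ^ 2 * |x| ^ n :=
        abs_iterate_hlogPair_le hδ (fun t ht ↦ add_le_add_right ht.1 1) hC n x right_mem_uIcc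
    _ ≤ C / (1 + 0 ⊓ x) ^ n / n ! * |x| ^ n := by
        gcongr
        exact le_self_pow₀ hfact two_ne_zero
    _ = C * ((|x| / (1 + 0 ⊓ x)) ^ n / n !) := by rw [div_pow]; ring

lemma summable_abs_pow_mul_iterate_hlogPair (hf : ContinuousOn f (Ioi (-1))) (hx : -1 < x)
    (c : ℝ) : Summable fun n ↦ |c ^ n * hlogPair^[n] f x| := by
  obtain ⟨C, r, hCr⟩ := exists_abs_iterate_hlogPair_le hf hx
  refine .of_nonneg_of_le (fun _ ↦ abs_nonneg _) (fun n ↦ ?_)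
    ((summable_pow_div_factorial (|c| * r)).mul_left C)
  calc |c ^ n * hlogPair^[n] f x| = |c| ^ n * |hlogPair^[n] f x| := by rw [abs_mul, abs_pow]
    _ ≤ |c| ^ n * (C * (r ^ n / n !)) := by gcongr; exact hCr n
    _ = C * ((|c| * r) ^ n / n !) := by ring

lemma eq_sum_iterate_hlogPair_add {c : ℝ} (hf : ContinuousOn f (Ioi (-1)))
    (hG : ContinuousOn G (Ioi (-1))) (hfix : ∀ y, -1 < y → G y = f y + c * hlogPair G y)
    (hx : -1 < x) (N : ℕ) :
    G x = ∑ n ∈ Finset.range N, c ^ n * hlogPair^[n] f x + c ^ N * hlogPair^[N] G x := by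
  induction N with
  | zero => simp
  | succ N ih =>
    have hstep : hlogPair^[N] G x = hlogPair^[N] f x + c * hlogPair^[N + 1] G x :=
      (iterate_hlogPair_congr hfix N hx).trans
        (iterate_hlogPair_add_const_mul hf (continuousOn_hlogPair hG) c N hx)
    rw [ih, hstep, Finset.sum_range_succ]
    ring

lemma hasSum_pow_mul_iterate_hlogPair {c : ℝ} (hf : ContinuousOn f (Ioi (-1)))
    (hG : ContinuousOn G (Ioi (-1))) (hfix : ∀ y, -1 < y → G y = f y + c * hlogPair G y)
    (hx : -1 < x) : HasSum (fun n ↦ c ^ n * hlogPair^[n] f x) (G x) := by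
  have hrem : Filter.Tendsto (fun N ↦ c ^ N * hlogPair^[N] G x) Filter.atTop (𝓝 0) :=
    (summable_abs_pow_mul_iterate_hlogPair hG hx c).of_abs.tendsto_atTop_zero
  refine (summable_abs_pow_mul_iterate_hlogPair hf hx c).of_abs.hasSum_iff_tendsto_nat.mpr ?_
  simpa only [eq_sub_of_add_eq (eq_sum_iterate_hlogPair_add hf hG hfix hx _).symm, sub_zero]
    using hrem.const_sub (G x)

end NeumannSeries

section EulerIntegral

/-- The integrand of Euler's integral for the hypergeometric function `₂F₁(-β, a; a + b; -x)`. -/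
noncomputable def eulerIntegrand (a b β x u : ℝ) : ℝ :=
  u ^ (a - 1) * (1 - u) ^ (b - 1) * (1 + x * u) ^ β

/-- Euler's integral, equal to `B(a, b) * ₂F₁(-β, a; a + b; -x)` with `B` the beta function.
The parameter `b` stands for `c - a` in the usual notation `₂F₁(-β, a; c; -x)`. -/
noncomputable def eulerIntegral (a b β x : ℝ) : ℝ :=
  ∫ u in (0 : ℝ)..1, eulerIntegrand a b β x u

variable {a b β x u : ℝ}

lemma ofReal_rpow_mul_one_sub_rpow (a b : ℝ) (hu : u ∈ Icc 0 1) :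
    ((u ^ (a - 1) * (1 - u) ^ (b - 1) : ℝ) : ℂ) =
      (u : ℂ) ^ ((a : ℂ) - 1) * (1 - (u : ℂ)) ^ ((b : ℂ) - 1) := by
  rw [Complex.ofReal_mul, Complex.ofReal_cpow hu.1, Complex.ofReal_cpow (sub_nonneg.mpr hu.2)]
  push_cast
  rfl

lemma intervalIntegrable_rpow_mul_one_sub_rpow (ha : 0 < a) (hb : 0 < b) :
    IntervalIntegrable (fun u : ℝ ↦ u ^ (a - 1) * (1 - u) ^ (b - 1)) volume 0 1 := by
  have h := Complex.betaIntegral_convergent (u := a) (v := b) (by simpa) (by simpa)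
  rw [intervalIntegrable_iff_integrableOn_Ioc_of_le zero_le_one] at h ⊢
  refine (integrableOn_congr_fun (fun u hu ↦ ?_) measurableSet_Ioc).mp h.re
  simp only [← ofReal_rpow_mul_one_sub_rpow a b (Ioc_subset_Icc_self hu), RCLike.re_to_complex,
    Complex.ofReal_re]

lemma integral_rpow_mul_one_sub_rpow (ha : 0 < a) (hb : 0 < b) :
    ∫ u in (0 : ℝ)..1, u ^ (a - 1) * (1 - u) ^ (b - 1) = ProbabilityTheory.beta a b := by
  have h : Complex.betaIntegral a b =
      ((∫ u in (0 : ℝ)..1, u ^ (a - 1) * (1 - u) ^ (b - 1) : ℝ) : ℂ) := by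
    rw [Complex.betaIntegral, ← intervalIntegral.integral_ofReal]
    refine intervalIntegral.integral_congr fun u hu ↦ ?_
    rw [uIcc_of_le zero_le_one] at hu
    exact (ofReal_rpow_mul_one_sub_rpow a b hu).symm
  rw [ProbabilityTheory.beta_eq_betaIntegralReal a b ha hb, h, Complex.ofReal_re]

lemma eulerIntegral_apply_zero (ha : 0 < a) (hb : 0 < b) (β : ℝ) :
    eulerIntegral a b β 0 = ProbabilityTheory.beta a b := by
  simp [eulerIntegral, eulerIntegrand, integral_rpow_mul_one_sub_rpow ha hb]

lemma one_add_mul_pos (hx : -1 < x) (hu : u ∈ Icc 0 1) : 0 < 1 + x * u := by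
  nlinarith [hu.1, hu.2, mul_nonneg hu.1 (by linarith : 0 ≤ 1 + x)]

lemma continuousOn_one_add_mul_rpow (β : ℝ) (hx : -1 < x) :
    ContinuousOn (fun u : ℝ ↦ (1 + x * u) ^ β) (uIcc 0 1) := by
  rw [uIcc_of_le zero_le_one]
  exact ContinuousOn.rpow_const (by fun_prop) fun u hu ↦ .inl (one_add_mul_pos hx hu).ne'

lemma intervalIntegrable_eulerIntegrand (ha : 0 < a) (hb : 0 < b) (β : ℝ) (hx : -1 < x) :
    IntervalIntegrable (eulerIntegrand a b β x) volume 0 1 :=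
  (intervalIntegrable_rpow_mul_one_sub_rpow ha hb).mul_continuousOn
    (continuousOn_one_add_mul_rpow β hx)

lemma eulerIntegrand_add_one_first (b β x : ℝ) (hu : u ≠ 0) :
    eulerIntegrand (a + 1) b β x u = u * eulerIntegrand a b β x u := by
  rw [eulerIntegrand, eulerIntegrand, add_sub_right_comm, rpow_add_one hu]
  ring

lemma eulerIntegrand_add_one_second (a β x : ℝ) (hu : 1 - u ≠ 0) :
    eulerIntegrand a (b + 1) β x u = (1 - u) * eulerIntegrand a b β x u := by
  rw [eulerIntegrand, eulerIntegrand, add_sub_right_comm b, rpow_add_one hu]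
  ring

lemma eulerIntegrand_add_one_third (a b β : ℝ) (hxu : 1 + x * u ≠ 0) :
    eulerIntegrand a b (β + 1) x u = (1 + x * u) * eulerIntegrand a b β x u := by
  rw [eulerIntegrand, eulerIntegrand, rpow_add_one hxu]
  ring

lemma eulerIntegral_add_one_second (ha : 0 < a) (hb : 0 < b) (β : ℝ) (hx : -1 < x) :
    eulerIntegral a (b + 1) β x = eulerIntegral a b β x - eulerIntegral (a + 1) b β x := by
  rw [eulerIntegral, eulerIntegral, eulerIntegral, ← intervalIntegral.integral_sub
    (intervalIntegrable_eulerIntegrand ha hb β hx)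
    (intervalIntegrable_eulerIntegrand (by positivity) hb β hx)]
  refine intervalIntegral.integral_congr_Ioo_of_le zero_le_one fun u hu ↦ ?_
  simp only [eulerIntegrand_add_one_second a β x (sub_pos.mpr hu.2).ne',
    eulerIntegrand_add_one_first b β x hu.1.ne']
  ring

lemma eulerIntegral_add_one_third (ha : 0 < a) (hb : 0 < b) (β : ℝ) (hx : -1 < x) :
    eulerIntegral a b (β + 1) x = eulerIntegral a b β x + x * eulerIntegral (a + 1) b β x := by
  rw [eulerIntegral, eulerIntegral, eulerIntegral, ← intervalIntegral.integral_const_mul,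
    ← intervalIntegral.integral_add (intervalIntegrable_eulerIntegrand ha hb β hx)
    ((intervalIntegrable_eulerIntegrand (by positivity) hb β hx).const_mul x)]
  refine intervalIntegral.integral_congr_Ioo_of_le zero_le_one fun u hu ↦ ?_
  simp only [eulerIntegrand_add_one_first b β x hu.1.ne',
    eulerIntegrand_add_one_third a b β (one_add_mul_pos hx (Ioo_subset_Icc_self hu)).ne']
  ring

lemma hasDerivAt_eulerIntegral (ha : 0 < a) (hb : 0 < b) (β : ℝ) (hx : -1 < x) :
    HasDerivAt (eulerIntegral a b β) (β * eulerIntegral (a + 1) b (β - 1) x) x := by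
  have hderiv : ∀ y ∈ Ioi (-1 : ℝ), ∀ u ∈ uIcc (0 : ℝ) 1,
      HasDerivAt (fun z ↦ (1 + z * u) ^ β) (u * β * (1 + y * u) ^ (β - 1)) y := by
    intro y hy u hu
    rw [uIcc_of_le zero_le_one] at hu
    have hlin : HasDerivAt (fun z : ℝ ↦ 1 + z * u) u y := by
      simpa using ((hasDerivAt_id y).mul_const u).const_add 1
    exact hlin.rpow_const (.inl (one_add_mul_pos hy hu).ne')
  have hcont : ContinuousOn (Function.uncurry fun y u : ℝ ↦ u * β * (1 + y * u) ^ (β - 1))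
      (Ioi (-1) ×ˢ uIcc 0 1) := by
    rw [uIcc_of_le zero_le_one]
    exact ContinuousOn.mul (by fun_prop)
      (.rpow_const (by fun_prop) fun p hp ↦ .inl (one_add_mul_pos hp.1 hp.2).ne')
  refine (hasDerivAt_integral_mul_of_continuousOn
    (intervalIntegrable_rpow_mul_one_sub_rpow ha hb) (Ioi_mem_nhds hx)
    (fun y hy ↦ continuousOn_one_add_mul_rpow β hy) hcont hderiv).congr_deriv ?_
  rw [eulerIntegral, ← intervalIntegral.integral_const_mul]
  refine intervalIntegral.integral_congr_Ioo_of_le zero_le_one fun u hu ↦ ?_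
  simp only [eulerIntegrand_add_one_first b (β - 1) x hu.1.ne']
  rw [eulerIntegrand]
  ring

lemma continuousOn_eulerIntegral (ha : 0 < a) (hb : 0 < b) (β : ℝ) :
    ContinuousOn (eulerIntegral a b β) (Ioi (-1)) :=
  fun _ hx ↦ (hasDerivAt_eulerIntegral ha hb β hx).continuousAt.continuousWithinAt

lemma hasDerivAt_eulerIntegrand (a b β : ℝ) (hx : -1 < x) (hu : u ∈ Ioo 0 1) :
    HasDerivAt (eulerIntegrand (a + 1) (b + 1) β x)
      (a * eulerIntegrand a (b + 1) β x u - b * eulerIntegrand (a + 1) b β x u +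
        β * x * eulerIntegrand (a + 1) (b + 1) (β - 1) x u) u := by
  have hpow : HasDerivAt (fun v : ℝ ↦ v ^ (a + 1 - 1)) (1 * (a + 1 - 1) * u ^ (a + 1 - 1 - 1)) u :=
    (hasDerivAt_id u).rpow_const (.inl hu.1.ne')
  have hsub : HasDerivAt (fun v : ℝ ↦ (1 - v) ^ (b + 1 - 1))
      (-1 * (b + 1 - 1) * (1 - u) ^ (b + 1 - 1 - 1)) u :=
    ((hasDerivAt_id u).const_sub 1).rpow_const (.inl (sub_pos.mpr hu.2).ne')
  have hlin : HasDerivAt (fun v : ℝ ↦ 1 + x * v) x u := by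
    simpa using ((hasDerivAt_id u).const_mul x).const_add 1
  have hadd := hlin.rpow_const (p := β)
    (.inl (one_add_mul_pos hx (Ioo_subset_Icc_self hu)).ne')
  refine ((hpow.mul hsub).mul hadd).congr_deriv ?_
  simp only [eulerIntegrand, add_sub_cancel_right, Pi.mul_apply]
  ring

lemma eulerIntegral_integration_by_parts (ha : 0 < a) (hb : 0 < b) (β : ℝ) (hx : -1 < x) :
    a * eulerIntegral a (b + 1) β x - b * eulerIntegral (a + 1) b β x +
      β * x * eulerIntegral (a + 1) (b + 1) (β - 1) x = 0 := by
  have ha' : 0 < a + 1 := by positivity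
  have hb' : 0 < b + 1 := by positivity
  have h₁ := (intervalIntegrable_eulerIntegrand ha hb' β hx).const_mul a
  have h₂ := (intervalIntegrable_eulerIntegrand ha' hb β hx).const_mul b
  have h₃ := (intervalIntegrable_eulerIntegrand ha' hb' (β - 1) hx).const_mul (β * x)
  have hcont : ContinuousOn (eulerIntegrand (a + 1) (b + 1) β x) (Icc 0 1) := by
    have hxβ := continuousOn_one_add_mul_rpow β hx
    rw [uIcc_of_le zero_le_one] at hxβ
    refine .mul (.mul ?_ ?_) hxβ <;>
      exact ContinuousOn.rpow_const (by fun_prop) fun _ _ ↦ .inr (by linarith)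
  have hftc := intervalIntegral.integral_eq_sub_of_hasDerivAt_of_le zero_le_one hcont
    (fun u hu ↦ hasDerivAt_eulerIntegrand a b β hx hu) ((h₁.sub h₂).add h₃)
  rw [intervalIntegral.integral_add (h₁.sub h₂) h₃, intervalIntegral.integral_sub h₁ h₂] at hftc
  simp only [intervalIntegral.integral_const_mul] at hftc
  have hzero : eulerIntegrand (a + 1) (b + 1) β x 0 = 0 := by
    simp [eulerIntegrand, zero_rpow ha.ne']
  have hone : eulerIntegrand (a + 1) (b + 1) β x 1 = 0 := by
    simp [eulerIntegrand, zero_rpow hb.ne']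
  rwa [hzero, hone, sub_zero] at hftc

lemma eulerIntegral_hypergeometric_equation (ha : 0 < a) (hb : 0 < b) (β : ℝ) (hx : -1 < x) :
    x * (1 + x) * ((β - 1) * eulerIntegral (a + 2) b (β - 2) x) +
      (a + b + (1 + a - β) * x) * eulerIntegral (a + 1) b (β - 1) x =
        a * eulerIntegral a b β x := by
  have hβ₁ : β - 1 + 1 = β := sub_add_cancel β 1
  have hβ₂ : β - 2 + 1 = β - 1 := by ring
  have hβ₂' : β - 1 - 1 = β - 2 := by ring
  have ha₂ : a + 1 + 1 = a + 2 := by ring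
  have ha₁ : 0 < a + 1 := by positivity
  have hparts := eulerIntegral_integration_by_parts ha hb (β - 1) hx
  have hsecond := eulerIntegral_add_one_second ha hb (β - 1) hx
  have hsecond₁ := eulerIntegral_add_one_second ha₁ hb (β - 2) hx
  have hthird := eulerIntegral_add_one_third ha hb (β - 1) hx
  have hthird₁ := eulerIntegral_add_one_third ha₁ hb (β - 2) hx
  rw [hβ₁] at hthird
  rw [hβ₂, ha₂] at hthird₁
  rw [ha₂] at hsecond₁
  rw [hβ₂'] at hparts
  linear_combination -hparts + a * hsecond + (β - 1) * x * hsecond₁ - a * hthird -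
    (β - 1) * x * hthird₁

end EulerIntegral

section Hypergeometric

variable {α x : ℝ}

lemma hasDerivAt_mul_eulerIntegral (hα : α ∈ Ioo 0 1) (hx : -1 < x) :
    HasDerivAt (fun t ↦ t * (α * eulerIntegral (α + 1) (1 - α) (α - 1) t))
      (α ^ 2 * eulerIntegral α (1 - α) α x / (1 + x)) x := by
  have hb : 0 < 1 - α := sub_pos.mpr hα.2
  have hderiv := hasDerivAt_eulerIntegral (by linarith [hα.1] : 0 < α + 1) hb (α - 1) hx
  rw [show α + 1 + 1 = α + 2 by ring, show α - 1 - 1 = α - 2 by ring] at hderiv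
  refine ((hasDerivAt_id x).mul (hderiv.const_mul α)).congr_deriv ?_
  rw [id, eq_div_iff (by linarith)]
  linear_combination α * eulerIntegral_hypergeometric_equation hα.1 hb α hx

lemma sq_mul_hlogPair_eulerIntegral (hα : α ∈ Ioo 0 1) (hx : -1 < x) :
    α ^ 2 * hlogPair (eulerIntegral α (1 - α) α) x =
      eulerIntegral α (1 - α) α x - ProbabilityTheory.beta α (1 - α) := by
  have hb : 0 < 1 - α := sub_pos.mpr hα.2
  have ha₁ : 0 < α + 1 := by linarith [hα.1]
  have h := hlogPair_eq_sub_of_hasDerivAt (f := fun t ↦ α ^ 2 * eulerIntegral α (1 - α) α t)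
    (continuousOn_const.mul (continuousOn_eulerIntegral hα.1 hb α))
    (continuousOn_const.mul (continuousOn_eulerIntegral ha₁ hb (α - 1)))
    (fun t ht ↦ hasDerivAt_eulerIntegral hα.1 hb α ht)
    (fun t ht ↦ hasDerivAt_mul_eulerIntegral hα ht) hx
  rwa [hlogPair_const_mul, eulerIntegral_apply_zero hα.1 hb] at h

lemma Ghyp_eq_eulerIntegral (α : ℝ) :
    Ghyp α = fun x ↦ (ProbabilityTheory.beta α (1 - α))⁻¹ * eulerIntegral α (1 - α) α x := by
  ext x
  simp [Ghyp, eulerIntegral, eulerIntegrand, ProbabilityTheory.beta, mul_comm]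

lemma continuousOn_Ghyp (hα : α ∈ Ioo 0 1) : ContinuousOn (Ghyp α) (Ioi (-1)) := by
  rw [Ghyp_eq_eulerIntegral]
  exact continuousOn_const.mul (continuousOn_eulerIntegral hα.1 (sub_pos.mpr hα.2) α)

lemma Ghyp_eq_one_add_hlogPair (hα : α ∈ Ioo 0 1) (hx : -1 < x) :
    Ghyp α x = 1 + α ^ 2 * hlogPair (Ghyp α) x := by
  have hbeta := (ProbabilityTheory.beta_pos hα.1 (sub_pos.mpr hα.2)).ne'
  rw [Ghyp_eq_eulerIntegral, hlogPair_const_mul, mul_left_comm,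
    sq_mul_hlogPair_eulerIntegral hα hx, mul_sub, inv_mul_cancel₀ hbeta]
  ring

theorem hyperlog_series_A_general (hα : α ∈ Ioo 0 1) (hx : -1 < x) :
    Summable (fun n : ℕ ↦ |α ^ (2 * n) * Afun n x|) ∧
      ∑' n : ℕ, α ^ (2 * n) * Afun n x = Ghyp α x := by
  simp only [Afun_eq_iterate_hlogPair, pow_mul]
  exact ⟨summable_abs_pow_mul_iterate_hlogPair continuousOn_const hx _,
    (hasSum_pow_mul_iterate_hlogPair continuousOn_const (continuousOn_Ghyp hα)
      (fun _ hy ↦ Ghyp_eq_one_add_hlogPair hα hy) hx).tsum_eq⟩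

end Hypergeometric

theorem hyperlog_series_A (α : ℝ) (hα : α ∈ Set.Ioo (0:ℝ) 1) (x : ℝ) (hx : 0 ≤ x) :
    Summable (fun n : ℕ => |α ^ (2*n) * Afun n x|) ∧
    ∑' n : ℕ, α ^ (2*n) * Afun n x = Ghyp α x :=
  hyperlog_series_A_general hα (neg_one_lt_zero.trans_le hx)
end
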